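/- arXiv:1609.04438 — 2 statements merged into one kernel-verified Lean document; each statement's English description precedes it below -/
import Mathlib

section
/- Let $n\geq 1$, $s\in(0,1)$, $e\in\partial B_1\subset\mathbb{R}^n$. Let $\phi_\star$ be the first Dirichlet eigenfunction of $(-\Delta)^s$ on $B_1$ with eigenvalue $\lambda_\star>0$, and let $\kappa_\star=2^s\kappa(n,s)\int_{B_1}\phi_\star(z)\frac{(1-|z|^2)^s}{s|z-e|^n}\,dz$. Then for every multi-index $\alpha\in\mathbb{N}^n$, the distributional limit $\lim_{\varepsilon\searrow0}\varepsilon^{|\alpha|-s}\partial^\alpha\phi_\star(e+\varepsilon X)=(-1)^{|\alpha|}\kappa_\star\lambda_\star\,\partial^\alpha_X\big[(-e\cdot X)_+^s\big]$ holds; that is, for every test function $\psi\in C^\infty_c(\mathbb{R}^n)$ one has $\lim_{\varepsilon\searrow0}\varepsilon^{-s}\int_{\mathbb{R}^n}\phi_\star(e+\varepsilon X)\,\partial^\alpha\psi(X)\,dX=\kappa_\star\lambda_\star\int_{\mathbb{R}^n}(-e\cdot X)_+^s\,\partial^\alpha\psi(X)\,dX$. -/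
open MeasureTheory Filter Metric Set
open scoped RealInnerProductSpace

/-- The normalizing constant `C(n,s)` of the fractional Laplacian. -/
noncomputable def fracC (n : ℕ) (s : ℝ) : ℝ :=
  4 ^ s * s * Real.Gamma ((n : ℝ) / 2 + s) / (Real.pi ^ ((n : ℝ) / 2) * Real.Gamma (1 - s))

/-- `HasFracLap n s u x L` : the principal value limit defining `(-Δ)^s u (x)`
exists and equals `L`. -/
def HasFracLap (n : ℕ) (s : ℝ) (u : EuclideanSpace ℝ (Fin n) → ℝ)
    (x : EuclideanSpace ℝ (Fin n)) (L : ℝ) : Prop :=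
  Tendsto (fun ρ : ℝ =>
      fracC n s * ∫ y in {y : EuclideanSpace ℝ (Fin n) | ρ ≤ ‖y‖},
        (u x - u (x + y)) / ‖y‖ ^ ((n : ℝ) + 2 * s))
    (nhdsWithin 0 (Set.Ioi 0)) (nhds L)

/-- The constant `κ(n,s) = Γ(n/2) / (4^s π^{n/2} Γ(s)²)`. -/
noncomputable def kappaC (n : ℕ) (s : ℝ) : ℝ :=
  Real.Gamma ((n : ℝ) / 2) / (4 ^ s * Real.pi ^ ((n : ℝ) / 2) * Real.Gamma s ^ 2)

/-- Directional (line) derivative along the vector `v`. -/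
noncomputable def dirDeriv {n : ℕ} (v : EuclideanSpace ℝ (Fin n))
    (g : EuclideanSpace ℝ (Fin n) → ℝ) : EuclideanSpace ℝ (Fin n) → ℝ :=
  fun p => lineDeriv ℝ g p v

/-- The mixed partial derivative `∂^α g` associated with a multi-index `α ∈ ℕ^n`. -/
noncomputable def multiDeriv {n : ℕ} (α : Fin n → ℕ)
    (g : EuclideanSpace ℝ (Fin n) → ℝ) : EuclideanSpace ℝ (Fin n) → ℝ :=
  (Finset.univ : Finset (Fin n)).toList.foldr
    (fun i h => (dirDeriv (EuclideanSpace.single i 1))^[α i] h) g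

/-!
Write `k_b(x) = (1 - |x|²)₊ˢ / |x - b|ⁿ`. For a pole `|b| > 1`, inversion centred at a point `x` of
the unit ball turns `(-Δ)ˢ k_b(x)` into the mass of a kernel over the exterior of a ball, which in
polar coordinates around its pole is a Beta integral; the result is
`(-Δ)ˢ k_b(x) = c (|b|² - 1)ˢ / |x - b|ⁿ⁺²ˢ` with `c > 0`. Two consequences:

* By the maximum principle, with `k_b` as barrier, a solution `u` of `(-Δ)ˢ u = f` in the ball that
  vanishes outside satisfies `|u| ≤ C (sup |f|) (1 - |x|²)₊ˢ`.
* For `u = k_b` the quotient `u / (1 - |x|²)ˢ` tends to `1 / |e - b|ⁿ` at `e`, and by a second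
  radial integral this equals `κ(n,s) / s * ∫ f k_e` with `f = (-Δ)ˢ k_b`.

The functions `|x - b|⁻ⁿ⁻²ˢ`, `|b| > 1`, span a dense subspace of the continuous functions on the
closed ball: derivatives in `b` produce all functions of `|x - b|`, hence Gaussians, to which the
Stone–Weierstrass theorem applies. By density and the first bound, the formula for the limit at `e`
holds for all solutions with continuous `f`, and dominated convergence gives the blow-up at `e`.
-/

open Module
open scoped Topology Pointwise

section UniformClosure

variable {X : Type*} {K : Set X} {V : Submodule ℝ (X → ℝ)} {f g : X → ℝ}

/-- The subspace of functions that are uniform limits on `K` of members of the subspace `V`;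
their values outside `K` are arbitrary. -/
def uniformClosureOn (K : Set X) (V : Submodule ℝ (X → ℝ)) : Submodule ℝ (X → ℝ) where
  carrier := {f | ∀ ε > 0, ∃ g ∈ V, ∀ x ∈ K, |f x - g x| ≤ ε}
  zero_mem' ε hε := ⟨0, V.zero_mem, fun x _ => by simpa using hε.le⟩
  add_mem' {f₁ f₂} h₁ h₂ ε hε := by
    obtain ⟨g₁, hg₁, hfg₁⟩ := h₁ (ε / 2) (by positivity)
    obtain ⟨g₂, hg₂, hfg₂⟩ := h₂ (ε / 2) (by positivity)
    refine ⟨g₁ + g₂, V.add_mem hg₁ hg₂, fun x hx => ?_⟩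
    calc |(f₁ + f₂) x - (g₁ + g₂) x| = |(f₁ x - g₁ x) + (f₂ x - g₂ x)| := by
          simp only [Pi.add_apply, add_sub_add_comm]
      _ ≤ ε / 2 + ε / 2 := (abs_add_le _ _).trans (add_le_add (hfg₁ x hx) (hfg₂ x hx))
      _ = ε := add_halves ε
  smul_mem' c f h ε hε := by
    obtain ⟨g, hg, hfg⟩ := h (ε / (|c| + 1)) (by positivity)
    refine ⟨c • g, V.smul_mem c hg, fun x hx => ?_⟩
    calc |(c • f) x - (c • g) x| = |c| * |f x - g x| := by
          simp only [Pi.smul_apply, smul_eq_mul, ← mul_sub, abs_mul]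
      _ ≤ (|c| + 1) * (ε / (|c| + 1)) := by
          gcongr
          · linarith
          · exact hfg x hx
      _ = ε := by field_simp

theorem le_uniformClosureOn : V ≤ uniformClosureOn K V :=
  fun f hf ε hε => ⟨f, hf, fun x _ => by simpa using hε.le⟩

theorem mem_uniformClosureOn_of_forall_exists
    (h : ∀ ε > 0, ∃ g ∈ uniformClosureOn K V, ∀ x ∈ K, |f x - g x| ≤ ε) :
    f ∈ uniformClosureOn K V := by
  intro ε hε
  obtain ⟨g, hg, hfg⟩ := h (ε / 2) (by positivity)
  obtain ⟨g', hg', hgg'⟩ := hg (ε / 2) (by positivity)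
  exact ⟨g', hg', fun x hx => (abs_sub_le _ (g x) _).trans (by linarith [hfg x hx, hgg' x hx])⟩

theorem mem_uniformClosureOn_congr (hg : g ∈ uniformClosureOn K V) (h : EqOn f g K) :
    f ∈ uniformClosureOn K V :=
  mem_uniformClosureOn_of_forall_exists fun ε hε => ⟨g, hg, fun x hx => by simpa [h hx] using hε.le⟩

theorem mem_uniformClosureOn_of_tendstoUniformlyOn {ι : Type*} {l : Filter ι} [l.NeBot]
    {F : ι → X → ℝ} (hF : ∀ᶠ i in l, F i ∈ uniformClosureOn K V)
    (h : TendstoUniformlyOn F f l K) : f ∈ uniformClosureOn K V := by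
  refine mem_uniformClosureOn_of_forall_exists fun ε hε => ?_
  obtain ⟨i, hi, hdist⟩ := (hF.and (Metric.tendstoUniformlyOn_iff.1 h ε hε)).exists
  exact ⟨F i, hi, fun x hx => (hdist x hx).le⟩

variable [UniformSpace X]

theorem tendstoUniformlyOn_slope (hK : IsCompact K) {F F' : ℝ → X → ℝ} {t₀ : ℝ} {U : Set ℝ}
    (hU : U ∈ 𝓝 t₀) (hF : ∀ t ∈ U, ∀ x ∈ K, HasDerivAt (F · x) (F' t x) t)
    (hF' : ContinuousOn (Function.uncurry F') (U ×ˢ K)) :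
    TendstoUniformlyOn (fun t x => slope (F · x) t₀ t) (F' t₀) (𝓝[≠] t₀) K := by
  have := isCompact_iff_compactSpace.1 hK
  have hrestrict : ContinuousOn (Function.uncurry fun t (x : K) => F' t x) (U ×ˢ univ) :=
    hF'.comp (f := fun p : ℝ × K => (p.1, (p.2 : X))) (by fun_prop) fun p hp => ⟨hp.1, p.2.2⟩
  have hunif : TendstoUniformly (fun t (x : K) => F' t x) (fun x => F' t₀ x) (𝓝 t₀) :=
    ContinuousOn.tendstoUniformly hU hrestrict
  refine Metric.tendstoUniformlyOn_iff.2 fun ε hε => ?_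
  obtain ⟨δ, hδ, hball⟩ := Metric.eventually_nhds_iff_ball.1
    ((Metric.tendstoUniformly_iff.1 hunif ε hε).and hU)
  have mean_value : ∀ a ∈ ball t₀ δ, ∀ b ∈ ball t₀ δ, a < b → ∀ x ∈ K,
      ∃ c ∈ ball t₀ δ, F' c x = slope (F · x) a b := by
    intro a ha b hb hab x hx
    have hsub : Icc a b ⊆ ball t₀ δ := (convex_ball t₀ δ).ordConnected.out ha hb
    have hderiv : ∀ t ∈ Icc a b, HasDerivAt (F · x) (F' t x) t :=
      fun t ht => hF t (hball t (hsub ht)).2 x hx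
    obtain ⟨c, hc, hslope⟩ := exists_hasDerivAt_eq_slope (F · x) (F' · x) hab
      (fun t ht => (hderiv t ht).continuousAt.continuousWithinAt)
      fun t ht => hderiv t (Ioo_subset_Icc_self ht)
    exact ⟨c, hsub (Ioo_subset_Icc_self hc), by rw [hslope, slope_def_field]⟩
  filter_upwards [nhdsWithin_le_nhds (ball_mem_nhds t₀ hδ), self_mem_nhdsWithin] with t ht hne x hx
  obtain ⟨c, hc, hslope⟩ : ∃ c ∈ ball t₀ δ, F' c x = slope (F · x) t₀ t := by
    rcases lt_or_gt_of_ne hne with hlt | hgt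
    · rw [slope_comm]
      exact mean_value t ht t₀ (mem_ball_self hδ) hlt x hx
    · exact mean_value t₀ (mem_ball_self hδ) t ht hgt x hx
  rw [← hslope]
  exact (hball c hc).1 ⟨x, hx⟩

theorem deriv_mem_uniformClosureOn (hK : IsCompact K) {F F' : ℝ → X → ℝ} {t₀ : ℝ} {U : Set ℝ}
    (hU : U ∈ 𝓝 t₀) (hF : ∀ t ∈ U, ∀ x ∈ K, HasDerivAt (F · x) (F' t x) t)
    (hF' : ContinuousOn (Function.uncurry F') (U ×ˢ K))
    (hmem : ∀ t ∈ U, F t ∈ uniformClosureOn K V) :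
    F' t₀ ∈ uniformClosureOn K V := by
  refine mem_uniformClosureOn_of_tendstoUniformlyOn ?_ (tendstoUniformlyOn_slope hK hU hF hF')
  filter_upwards [nhdsWithin_le_nhds hU] with t ht
  have hquot := (uniformClosureOn K V).smul_mem (t - t₀)⁻¹
    ((uniformClosureOn K V).sub_mem (hmem t ht) (hmem t₀ (mem_of_mem_nhds hU)))
  exact mem_uniformClosureOn_congr hquot fun x _ => rfl

end UniformClosure

/-- The Weierstrass theorem for `h y⁻¹ * y ^ (-μ)` as a function of `y = Q⁻¹`. -/
theorem exists_sum_rpow_neg_add_natCast_near {μ B : ℝ} (hμ : 0 ≤ μ) (hB : 0 < B) {h : ℝ → ℝ}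
    (hh : ContinuousOn h (Ioi 0)) {ε : ℝ} (hε : 0 < ε) :
    ∃ (N : ℕ) (a : ℕ → ℝ), ∀ Q ∈ Icc B⁻¹ B,
      |h Q - ∑ i ∈ Finset.range N, a i * Q ^ (-(μ + i))| ≤ ε := by
  have hpos : ∀ y ∈ Icc B⁻¹ B, 0 < y := fun y hy => (inv_pos.2 hB).trans_le hy.1
  have hcont : ContinuousOn (fun y : ℝ => h y⁻¹ * y ^ (-μ)) (Icc B⁻¹ B) :=
    (hh.comp (continuousOn_id.inv₀ fun y hy => (hpos y hy).ne') fun y hy =>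
      inv_pos.2 (hpos y hy)).mul (continuousOn_id.rpow_const fun y hy => .inl (hpos y hy).ne')
  obtain ⟨p, hp⟩ := exists_polynomial_near_of_continuousOn _ _ _ hcont (ε / B ^ μ) (by positivity)
  refine ⟨p.natDegree + 1, p.coeff, fun Q hQB => ?_⟩
  have hQ := hpos Q hQB
  have hQinv : Q⁻¹ ≤ B := inv_le_of_inv_le₀ hB hQB.1
  have hsum : ∑ i ∈ Finset.range (p.natDegree + 1), p.coeff i * Q ^ (-(μ + i)) =
      Q ^ (-μ) * p.eval Q⁻¹ := by
    rw [Polynomial.eval_eq_sum_range, Finset.mul_sum]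
    refine Finset.sum_congr rfl fun i _ => ?_
    rw [neg_add, Real.rpow_add hQ, Real.rpow_neg hQ.le (i : ℝ), Real.rpow_natCast, inv_pow]
    ring
  have hhQ : h Q = Q ^ (-μ) * (h Q⁻¹⁻¹ * Q⁻¹ ^ (-μ)) := by
    rw [inv_inv, mul_left_comm, ← Real.mul_rpow hQ.le (inv_pos.2 hQ).le, mul_inv_cancel₀ hQ.ne',
      Real.one_rpow, mul_one]
  rw [hsum, hhQ, ← mul_sub, abs_mul, abs_of_pos (Real.rpow_pos_of_pos hQ _), abs_sub_comm]
  calc Q ^ (-μ) * |p.eval Q⁻¹ - h Q⁻¹⁻¹ * Q⁻¹ ^ (-μ)|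
      ≤ B ^ μ * (ε / B ^ μ) := by
        rw [Real.rpow_neg_eq_inv_rpow]
        gcongr
        exact (hp Q⁻¹ ⟨inv_anti₀ hQ hQB.2, hQinv⟩).le
    _ = ε := by field_simp

section PowersOfDistance

variable {E : Type*} [NormedAddCommGroup E] {K U : Set E} {V : Submodule ℝ (E → ℝ)} {μ : ℝ}

theorem continuousOn_norm_sub_sq_rpow (hKU : Disjoint K U) (ν : ℝ) :
    ContinuousOn (fun p : E × E => (‖p.2 - p.1‖ ^ 2) ^ ν) (U ×ˢ K) := by
  refine ContinuousOn.rpow_const (by fun_prop) fun p hp => Or.inl ?_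
  simpa [sub_eq_zero] using (hKU.ne_of_mem hp.2 hp.1)

variable [InnerProductSpace ℝ E]

theorem lineDeriv_mem_uniformClosureOn (hK : IsCompact K) (hU : IsOpen U) {Φ Φ' : E → E → ℝ}
    {v : E} (hΦ : ∀ b ∈ U, ∀ x ∈ K, HasLineDerivAt ℝ (Φ · x) (Φ' b x) b v)
    (hΦ' : ContinuousOn (Function.uncurry Φ') (U ×ˢ K))
    (hmem : ∀ b ∈ U, Φ b ∈ uniformClosureOn K V) :
    ∀ b ∈ U, Φ' b ∈ uniformClosureOn K V := by
  intro b hb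
  have hline : Continuous fun t : ℝ => b + t • v := by fun_prop
  have hnhds : {t : ℝ | b + t • v ∈ U} ∈ 𝓝 0 :=
    hline.continuousAt.preimage_mem_nhds (hU.mem_nhds (by simpa using hb))
  have hderiv : ∀ t ∈ {t : ℝ | b + t • v ∈ U}, ∀ x ∈ K,
      HasDerivAt (fun t => Φ (b + t • v) x) (Φ' (b + t • v) x) t := by
    intro t ht x hx
    have hzero : HasDerivAt (fun r : ℝ => Φ (b + t • v + r • v) x) (Φ' (b + t • v) x) (t - t) := by
      rw [sub_self]
      exact hΦ _ ht x hx
    refine hzero.comp_sub_const.congr_of_eventuallyEq (Eventually.of_forall fun r => ?_)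
    simp only [add_assoc, ← add_smul, add_sub_cancel]
  have hcont : ContinuousOn (Function.uncurry fun (t : ℝ) x => Φ' (b + t • v) x)
      ({t : ℝ | b + t • v ∈ U} ×ˢ K) :=
    hΦ'.comp (f := fun p : ℝ × E => (b + p.1 • v, p.2)) (by fun_prop) fun p hp => ⟨hp.1, hp.2⟩
  simpa using deriv_mem_uniformClosureOn hK hnhds hderiv hcont fun t ht => hmem _ ht

theorem hasLineDerivAt_norm_sub_sq (x b v : E) :
    HasLineDerivAt ℝ (fun b => ‖x - b‖ ^ 2) (-2 * ⟪x - b, v⟫) b v := by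
  have hline : HasDerivAt (fun t : ℝ => x - (b + t • v)) (-v) 0 := by
    simpa using (((hasDerivAt_id (0 : ℝ)).smul_const v).const_add b).const_sub x
  have := hline.norm_sq
  simp only [zero_smul, add_zero, inner_neg_right] at this
  exact this.congr_deriv (by ring)

theorem hasLineDerivAt_norm_sub_sq_rpow {x b : E} (hxb : x ≠ b) (μ : ℝ) (v : E) :
    HasLineDerivAt ℝ (fun b => (‖x - b‖ ^ 2) ^ (-μ))
      (2 * μ * (⟪x - b, v⟫ * (‖x - b‖ ^ 2) ^ (-(μ + 1)))) b v := by
  have hne : ‖x - b‖ ^ 2 ≠ 0 := by simpa [sub_eq_zero] using hxb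
  have hsq : HasDerivAt (fun t : ℝ => ‖x - (b + t • v)‖ ^ 2) (-2 * ⟪x - b, v⟫) 0 :=
    hasLineDerivAt_norm_sub_sq x b v
  have := hsq.rpow_const (p := -μ) (Or.inl (by simpa using hne))
  refine this.congr_deriv ?_
  rw [zero_smul, add_zero, ← neg_add']
  ring

theorem hasLineDerivAt_inner_mul_norm_sub_sq_rpow {x b : E} (hxb : x ≠ b) (μ : ℝ) (v : E) :
    HasLineDerivAt ℝ (fun b => ⟪x - b, v⟫ * (‖x - b‖ ^ 2) ^ (-μ))
      (2 * μ * (⟪x - b, v⟫ ^ 2 * (‖x - b‖ ^ 2) ^ (-(μ + 1))) - ‖v‖ ^ 2 * (‖x - b‖ ^ 2) ^ (-μ))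
      b v := by
  have hinner : HasDerivAt (fun t : ℝ => ⟪x - (b + t • v), v⟫) (-‖v‖ ^ 2) 0 := by
    have hline : HasDerivAt (fun t : ℝ => x - (b + t • v)) (-v) 0 := by
      simpa using (((hasDerivAt_id (0 : ℝ)).smul_const v).const_add b).const_sub x
    simpa using hline.inner ℝ (hasDerivAt_const 0 v)
  have := hinner.mul (hasLineDerivAt_norm_sub_sq_rpow hxb μ v)
  refine this.congr_deriv ?_
  rw [zero_smul, add_zero]
  ring

section Laplacian

variable [FiniteDimensional ℝ E]

/-- Up to the factor `2μ(2μ + 2 - dim E)`, the function `|x - b| ^ (-2μ - 2)` is the Laplacian of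
`|x - b| ^ (-2μ)` in the pole `b`. -/
theorem rpow_neg_add_one_mem_uniformClosureOn (hK : IsCompact K) (hU : IsOpen U)
    (hKU : Disjoint K U) (hμ : μ ≠ 0) (hμE : 2 * μ + 2 ≠ finrank ℝ E)
    (H : ∀ b ∈ U, (fun x => (‖x - b‖ ^ 2) ^ (-μ)) ∈ uniformClosureOn K V) :
    ∀ b ∈ U, (fun x => (‖x - b‖ ^ 2) ^ (-(μ + 1))) ∈ uniformClosureOn K V := by
  set W := uniformClosureOn K V
  have hne : ∀ b ∈ U, ∀ x ∈ K, x ≠ b := fun b hb x hx => hKU.ne_of_mem hx hb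
  have first_derivative : ∀ v : E, ∀ b ∈ U,
      (fun x => ⟪x - b, v⟫ * (‖x - b‖ ^ 2) ^ (-(μ + 1))) ∈ W := by
    intro v b hb
    have := lineDeriv_mem_uniformClosureOn hK hU
      (fun b hb x hx => hasLineDerivAt_norm_sub_sq_rpow (hne b hb x hx) μ v)
      ((ContinuousOn.mul (by fun_prop) (continuousOn_norm_sub_sq_rpow hKU _)).const_mul _) H b hb
    exact (W.smul_mem_iff (mul_ne_zero two_ne_zero hμ)).1 this
  have second_derivative : ∀ v : E, ∀ b ∈ U,
      (fun x => 2 * (μ + 1) * (⟪x - b, v⟫ ^ 2 * (‖x - b‖ ^ 2) ^ (-(μ + 1 + 1))) -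
        ‖v‖ ^ 2 * (‖x - b‖ ^ 2) ^ (-(μ + 1))) ∈ W := by
    intro v b hb
    refine lineDeriv_mem_uniformClosureOn hK hU
      (fun b hb x hx => hasLineDerivAt_inner_mul_norm_sub_sq_rpow (hne b hb x hx) (μ + 1) v)
      ?_ (first_derivative v) b hb
    exact ((ContinuousOn.mul (by fun_prop) (continuousOn_norm_sub_sq_rpow hKU _)).const_mul _).sub
      ((continuousOn_norm_sub_sq_rpow hKU _).const_mul _)
  intro b hb
  let w := stdOrthonormalBasis ℝ E
  refine (W.smul_mem_iff (sub_ne_zero.2 hμE)).1 <|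
    mem_uniformClosureOn_congr (W.sum_mem fun i (_ : i ∈ Finset.univ) =>
      second_derivative (w i) b hb) fun x hx => ?_
  have hpos : 0 < ‖x - b‖ ^ 2 := by
    have := norm_pos_iff.2 (sub_ne_zero.2 (hne b hb x hx))
    positivity
  have hpyth : ∑ i, ⟪x - b, w i⟫ ^ 2 = ‖x - b‖ ^ 2 := by
    simpa [sq_abs, real_inner_comm] using w.sum_sq_norm_inner_right (x - b)
  simp only [Pi.smul_apply, smul_eq_mul, Finset.sum_apply, Finset.sum_sub_distrib,
    ← Finset.mul_sum, ← Finset.sum_mul, hpyth, w.orthonormal.1, one_pow, Finset.sum_const,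
    Finset.card_univ, Fintype.card_fin, nsmul_eq_mul]
  have hshift : ‖x - b‖ ^ 2 * (‖x - b‖ ^ 2) ^ (-(μ + 1 + 1)) = (‖x - b‖ ^ 2) ^ (-(μ + 1)) := by
    rw [show -(μ + 1) = 1 + -(μ + 1 + 1) by ring, Real.rpow_add hpos, Real.rpow_one]
  rw [hshift]
  ring

theorem rpow_neg_add_nat_mem_uniformClosureOn (hK : IsCompact K) (hU : IsOpen U)
    (hKU : Disjoint K U) (hμ : 0 < μ) (hμE : finrank ℝ E < 2 * μ + 2)
    (H : ∀ b ∈ U, (fun x => (‖x - b‖ ^ 2) ^ (-μ)) ∈ uniformClosureOn K V) (m : ℕ) :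
    ∀ b ∈ U, (fun x => (‖x - b‖ ^ 2) ^ (-(μ + m))) ∈ uniformClosureOn K V := by
  induction m with
  | zero => simpa using H
  | succ m ih =>
    simpa only [Nat.cast_succ, ← add_assoc] using
      rpow_neg_add_one_mem_uniformClosureOn hK hU hKU
        (by positivity) (by linarith [m.cast_nonneg (α := ℝ)]) ih

theorem comp_norm_sub_sq_mem_uniformClosureOn (hK : IsCompact K) (hU : IsOpen U)
    (hKU : Disjoint K U) (hμ : 0 < μ) (hμE : finrank ℝ E < 2 * μ + 2)
    (H : ∀ b ∈ U, (fun x => (‖x - b‖ ^ 2) ^ (-μ)) ∈ uniformClosureOn K V)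
    {h : ℝ → ℝ} (hh : ContinuousOn h (Ioi 0)) {b : E} (hb : b ∈ U) :
    (fun x => h (‖x - b‖ ^ 2)) ∈ uniformClosureOn K V := by
  have hpos : ∀ x ∈ K, 0 < ‖x - b‖ ^ 2 := fun x hx =>
    pow_pos (norm_pos_iff.2 (sub_ne_zero.2 (hKU.ne_of_mem hx hb))) 2
  obtain ⟨B, hB, hQB⟩ : ∃ B > 0, ∀ x ∈ K, ‖x - b‖ ^ 2 ∈ Icc B⁻¹ B := by
    obtain ⟨C, hC⟩ := hK.exists_bound_of_continuousOn
      (f := fun x => ‖x - b‖ ^ 2 + (‖x - b‖ ^ 2)⁻¹)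
      ((by fun_prop : ContinuousOn _ K).add
        (ContinuousOn.inv₀ (by fun_prop) fun x hx => (hpos x hx).ne'))
    refine ⟨max C 1, by positivity, fun x hx => ?_⟩
    have hbound := (le_abs_self _).trans ((hC x hx).trans (le_max_left C 1))
    have hinv := inv_pos.2 (hpos x hx)
    exact ⟨inv_le_of_inv_le₀ (hpos x hx) (by linarith [hpos x hx]), by linarith⟩
  refine mem_uniformClosureOn_of_forall_exists fun ε hε => ?_
  obtain ⟨N, a, ha⟩ := exists_sum_rpow_neg_add_natCast_near hμ.le hB hh hε
  refine ⟨∑ i ∈ Finset.range N, a i • fun x => (‖x - b‖ ^ 2) ^ (-(μ + i)),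
    Submodule.sum_mem _ fun i _ => Submodule.smul_mem _ _
      (rpow_neg_add_nat_mem_uniformClosureOn hK hU hKU hμ hμE H i b hb), fun x hx => ?_⟩
  simpa only [Finset.sum_apply, Pi.smul_apply, smul_eq_mul] using ha _ (hQB x hx)

end Laplacian

end PowersOfDistance

section Gaussians

variable {E : Type*} [NormedAddCommGroup E] [InnerProductSpace ℝ E] {K U : Set E}

/-- The Gaussians `exp (-t |x - b|²)`, `0 ≤ t`, with poles `b` in a nonempty convex set `U`, each
multiplied by `exp (t |b|²)` so that the exponent is `2 ⟪x, w⟫ - t |x|²` with `w = t • b`. -/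
noncomputable def gaussianSubmonoid (K : Set E) (hU : Convex ℝ U) (hne : U.Nonempty) :
    Submonoid C(K, ℝ) where
  carrier := {f | ∃ t : ℝ, 0 ≤ t ∧ ∃ w ∈ t • U,
    ∀ x : K, f x = Real.exp (2 * ⟪(x : E), w⟫ - t * ‖(x : E)‖ ^ 2)}
  one_mem' := ⟨0, le_rfl, 0, by simp [zero_smul_set hne], fun x => by simp⟩
  mul_mem' := by
    rintro f₁ f₂ ⟨t₁, ht₁, w₁, hw₁, hf₁⟩ ⟨t₂, ht₂, w₂, hw₂, hf₂⟩
    refine ⟨t₁ + t₂, add_nonneg ht₁ ht₂, w₁ + w₂, ?_, fun x => ?_⟩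
    · rw [hU.add_smul ht₁ ht₂]
      exact add_mem_add hw₁ hw₂
    · rw [ContinuousMap.mul_apply, hf₁, hf₂, ← Real.exp_add, inner_add_right]
      ring_nf

theorem gaussian_mem_gaussianSubmonoid (hU : Convex ℝ U) {b : E} (hb : b ∈ U) :
    (⟨fun x => Real.exp (2 * ⟪(x : E), b⟫ - ‖(x : E)‖ ^ 2), by fun_prop⟩ : C(K, ℝ)) ∈
      gaussianSubmonoid K hU ⟨b, hb⟩ :=
  ⟨1, zero_le_one, b, by simpa using hb, fun x => by simp⟩

theorem separatesPoints_adjoin_gaussianSubmonoid (hU : Convex ℝ U) (hU' : IsOpen U)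
    (hne : U.Nonempty) :
    (Algebra.adjoin ℝ (gaussianSubmonoid K hU hne : Set C(K, ℝ))).SeparatesPoints := by
  intro x y hxy
  obtain ⟨b, hb⟩ := hne
  by_contra! hsep
  have hpole : ∀ c ∈ U, 2 * ⟪(x : E), c⟫ - ‖(x : E)‖ ^ 2 = 2 * ⟪(y : E), c⟫ - ‖(y : E)‖ ^ 2 :=
    fun c hc => Real.exp_injective <|
      hsep _ ⟨_, Algebra.subset_adjoin (gaussian_mem_gaussianSubmonoid hU hc), rfl⟩
  have hline : Continuous fun t : ℝ => b + t • ((x : E) - y) := by fun_prop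
  have hnhds : ∀ᶠ t : ℝ in 𝓝 0, b + t • ((x : E) - y) ∈ U :=
    hline.continuousAt.eventually_mem (hU'.mem_nhds (by simpa using hb))
  obtain ⟨t, htU, ht⟩ := ((hnhds.filter_mono nhdsWithin_le_nhds).and
    (self_mem_nhdsWithin (s := {0}ᶜ))).exists
  have hdiff : 2 * t * ⟪(x : E) - y, (x : E) - y⟫ = 0 := by
    have h₀ := hpole b hb
    have h₁ := hpole _ htU
    simp only [inner_add_right, real_inner_smul_right] at h₁
    rw [inner_sub_left]
    linear_combination h₁ - h₀
  have hinner : ⟪(x : E) - y, (x : E) - y⟫ = 0 :=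
    (mul_eq_zero.1 hdiff).resolve_left (mul_ne_zero two_ne_zero ht)
  exact hxy (Subtype.ext (sub_eq_zero.1 (inner_self_eq_zero.1 hinner)))

end Gaussians

theorem mem_uniformClosureOn_of_separatesPoints {X : Type*} [TopologicalSpace X] {K : Set X}
    {V : Submodule ℝ (X → ℝ)} (hK : IsCompact K) (M : Submonoid C(K, ℝ))
    (hsep : (Algebra.adjoin ℝ (M : Set C(K, ℝ))).SeparatesPoints)
    (hM : ∀ f ∈ M, ∃ F ∈ uniformClosureOn K V, ∀ x : K, F x = f x)
    {g : X → ℝ} (hg : ContinuousOn g K) : g ∈ uniformClosureOn K V := by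
  have := isCompact_iff_compactSpace.1 hK
  have hspan : ∀ f ∈ Algebra.adjoin ℝ (M : Set C(K, ℝ)),
      ∃ F ∈ uniformClosureOn K V, ∀ x : K, F x = f x := by
    intro f hf
    rw [← Subalgebra.mem_toSubmodule, Algebra.adjoin_eq_span, Submonoid.closure_eq] at hf
    induction hf using Submodule.span_induction with
    | mem f hf => exact hM f hf
    | zero => exact ⟨0, Submodule.zero_mem _, fun x => rfl⟩
    | add f₁ f₂ _ _ h₁ h₂ =>
      obtain ⟨F₁, hF₁, hFf₁⟩ := h₁
      obtain ⟨F₂, hF₂, hFf₂⟩ := h₂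
      exact ⟨F₁ + F₂, Submodule.add_mem _ hF₁ hF₂, fun x => by simp [hFf₁, hFf₂]⟩
    | smul c f _ h =>
      obtain ⟨F, hF, hFf⟩ := h
      exact ⟨c • F, Submodule.smul_mem _ c hF, fun x => by simp [hFf]⟩
  refine mem_uniformClosureOn_of_forall_exists fun ε hε => ?_
  obtain ⟨⟨f, hf⟩, hdist⟩ :=
    ContinuousMap.exists_mem_subalgebra_near_continuous_of_separatesPoints _ hsep
      (K.domRestrict g) hg.domRestrict ε hε
  obtain ⟨F, hF, hFf⟩ := hspan f hf
  refine ⟨F, hF, fun x hx => ?_⟩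
  rw [hFf ⟨x, hx⟩, abs_sub_comm]
  exact (hdist ⟨x, hx⟩).le

theorem continuousOn_mem_uniformClosureOn {E : Type*} [NormedAddCommGroup E]
    [InnerProductSpace ℝ E] [FiniteDimensional ℝ E] {K U : Set E} {V : Submodule ℝ (E → ℝ)} {μ : ℝ}
    (hK : IsCompact K) (hU : IsOpen U) (hne : U.Nonempty) (hKU : Disjoint K U) (hμ : 0 < μ)
    (hμE : finrank ℝ E < 2 * μ + 2)
    (H : ∀ b ∈ U, (fun x => (‖x - b‖ ^ 2) ^ (-μ)) ∈ V) {g : E → ℝ} (hg : ContinuousOn g K) :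
    g ∈ uniformClosureOn K V := by
  obtain ⟨b₀, hb₀⟩ := hne
  obtain ⟨r, hr, hball⟩ := Metric.isOpen_iff.1 hU b₀ hb₀
  have hne' : (ball b₀ r).Nonempty := nonempty_ball.2 hr
  refine mem_uniformClosureOn_of_separatesPoints hK
    (gaussianSubmonoid K (convex_ball b₀ r) hne')
    (separatesPoints_adjoin_gaussianSubmonoid (convex_ball b₀ r) isOpen_ball hne') ?_ hg
  rintro f ⟨t, -, w, ⟨b, hb, rfl⟩, hf⟩
  have hgauss := comp_norm_sub_sq_mem_uniformClosureOn (h := fun Q => Real.exp (-t * Q)) hK hU hKU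
    hμ hμE (fun b hb => le_uniformClosureOn (H b hb)) (by fun_prop) (hball hb)
  refine ⟨_, Submodule.smul_mem _ (Real.exp (t * ‖b‖ ^ 2)) hgauss, fun x => ?_⟩
  simp only [Pi.smul_apply, smul_eq_mul]
  rw [hf, ← Real.exp_add, norm_sub_sq_real, real_inner_smul_right]
  ring_nf

section Inversion

variable {E F : Type*} [NormedAddCommGroup E] [InnerProductSpace ℝ E]

lemma div_norm_sq_smul_div_norm_sq_smul {k : ℝ} (hk : k ≠ 0) {w : E} (hw : w ≠ 0) :
    (k / ‖(k / ‖w‖ ^ 2) • w‖ ^ 2) • (k / ‖w‖ ^ 2) • w = w := by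
  have hw' : ‖w‖ ≠ 0 := norm_ne_zero_iff.2 hw
  rw [smul_smul]
  convert one_smul ℝ w
  rw [norm_smul, mul_pow, Real.norm_eq_abs, sq_abs]
  field_simp

lemma bijOn_div_norm_sq_smul {k : ℝ} (hk : k ≠ 0) :
    BijOn (fun w : E => (k / ‖w‖ ^ 2) • w) {0}ᶜ {0}ᶜ := by
  have maps : MapsTo (fun w : E => (k / ‖w‖ ^ 2) • w) {0}ᶜ {0}ᶜ := fun w hw => by
    simpa [hk] using hw
  have inv : LeftInvOn (fun w : E => (k / ‖w‖ ^ 2) • w) (fun w : E => (k / ‖w‖ ^ 2) • w) {0}ᶜ :=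
    fun w hw => div_norm_sq_smul_div_norm_sq_smul hk hw
  exact InvOn.bijOn ⟨inv, inv⟩ maps maps

lemma hasFDerivAt_div_norm_sq_smul (k : ℝ) {w : E} (hw : w ≠ 0) :
    HasFDerivAt (fun w : E => (k / ‖w‖ ^ 2) • w)
      ((k / ‖w‖ ^ 2) • ((ℝ ∙ w)ᗮ.reflection : E →L[ℝ] E)) w := by
  have h := (EuclideanGeometry.hasFDerivAt_inversion (c := (0 : E)) (R := 1) hw).const_smul k
  refine (h.congr_of_eventuallyEq (Eventually.of_forall fun z => ?_)).congr_fderiv ?_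
  · simp [EuclideanGeometry.inversion, smul_smul, div_eq_mul_inv]
  · simp [smul_smul, div_eq_mul_inv]

variable [FiniteDimensional ℝ E]

lemma abs_det_smul_reflection (c : ℝ) (K : Submodule ℝ E) :
    |(c • (K.reflection : E →L[ℝ] E)).det| = |c| ^ finrank ℝ E := by
  rw [ContinuousLinearMap.det, ContinuousLinearMap.toLinearMap_smul, LinearMap.det_smul, abs_mul,
    abs_pow]
  erw [K.det_reflection]
  simp

variable [NormedAddCommGroup F] [NormedSpace ℝ F] [MeasurableSpace E] [BorelSpace E]

theorem integral_eq_integral_div_norm_sq_smul [Nontrivial E] (μ : Measure E) [μ.IsAddHaarMeasure]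
    {k : ℝ} (hk : k ≠ 0) (g : E → F) :
    ∫ y, g y ∂μ =
      ∫ w, (|k| ^ finrank ℝ E / ‖w‖ ^ (2 * finrank ℝ E)) • g ((k / ‖w‖ ^ 2) • w) ∂μ := by
  have hbij := bijOn_div_norm_sq_smul (E := E) hk
  rw [← restrict_compl_singleton (μ := μ) (0 : E)]
  conv_lhs => rw [← hbij.image_eq]
  rw [integral_image_eq_integral_abs_det_fderiv_smul μ (measurableSet_singleton _).compl
    (fun w hw => (hasFDerivAt_div_norm_sq_smul k hw).hasFDerivWithinAt) hbij.injOn]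
  refine setIntegral_congr_fun (measurableSet_singleton _).compl fun w _ => ?_
  simp only [abs_det_smul_reflection, abs_div, abs_pow, abs_norm, div_pow, ← pow_mul]

end Inversion

section RadialIntegrals

open scoped ENNReal

lemma image_const_add_sq_Ioi (a : ℝ) {c : ℝ} (hc : 0 ≤ c) :
    (fun u : ℝ => a + u ^ 2) '' Ioi c = Ioi (a + c ^ 2) := by
  ext p
  simp only [mem_image, mem_Ioi]
  constructor
  · rintro ⟨u, hu, rfl⟩
    gcongr
  · intro hp
    exact ⟨√(p - a), Real.lt_sqrt_of_sq_lt (by linarith), by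
      rw [Real.sq_sqrt (by nlinarith)]; ring⟩

lemma lintegral_eq_lintegral_Ioi_add_lintegral_Ioi_neg (f : ℝ → ℝ≥0∞) :
    ∫⁻ u, f u = (∫⁻ u in Ioi 0, f u) + ∫⁻ u in Ioi 0, f (-u) := by
  have h := (Measure.measurePreserving_neg (volume : Measure ℝ)).setLIntegral_comp_preimage_emb
    (Homeomorph.neg ℝ).measurableEmbedding f (Iic 0)
  rw [neg_preimage, neg_Iic, neg_zero, setLIntegral_congr Ioi_ae_eq_Ici.symm] at h
  rw [h, ← lintegral_add_compl f measurableSet_Ioi, compl_Ioi]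

lemma ofReal_inv_abs_sub_add_ofReal_inv_abs_add {c u : ℝ} (h : |c| < u) :
    ENNReal.ofReal |u - c|⁻¹ + ENNReal.ofReal |u + c|⁻¹ =
      ENNReal.ofReal |2 * u| * ENNReal.ofReal (u ^ 2 - c ^ 2)⁻¹ := by
  obtain ⟨h₁, h₂⟩ := abs_lt.1 h
  have hsub : 0 < u - c := by linarith
  have hadd : 0 < u + c := by linarith
  rw [abs_of_pos hsub, abs_of_pos hadd, ← ENNReal.ofReal_add (by positivity) (by positivity),
    ← ENNReal.ofReal_mul (by positivity), abs_of_pos (by linarith), sq_sub_sq]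
  congr 1
  field_simp
  ring

-- Completing the square, `p = β - c² + (r + c)²` runs twice over `(β, ∞)`, once from either end of
-- the chord; the two ends contribute `1 / (u - c) + 1 / (u + c) = 2u / (p - β)` with `u = |r + c|`.
theorem lintegral_chord {f : ℝ → ℝ≥0∞} (hf : Measurable f) {β : ℝ} (hfβ : ∀ p ≤ β, f p = 0)
    (c : ℝ) :
    ∫⁻ r, f (β + 2 * c * r + r ^ 2) * ENNReal.ofReal |r|⁻¹ =
      ∫⁻ p in Ioi β, f p * ENNReal.ofReal (p - β)⁻¹ := by
  set q : ℝ → ℝ := fun u => β - c ^ 2 + u ^ 2 with hq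
  have himage : q '' Ioi |c| = Ioi β := by
    rw [hq, image_const_add_sq_Ioi _ (abs_nonneg c), sq_abs, sub_add_cancel]
  have hinj : InjOn q (Ioi |c|) := fun u hu v hv huv =>
    (sq_eq_sq₀ ((abs_nonneg c).trans hu.le) ((abs_nonneg c).trans hv.le)).1 (add_left_cancel huv)
  have hderiv : ∀ u ∈ Ioi |c|, HasDerivWithinAt q (2 * u) (Ioi |c|) u := fun u _ =>
    (((hasDerivAt_pow 2 u).const_add (β - c ^ 2)).congr_deriv (by simp)).hasDerivWithinAt
  have hvanish : ∀ u ∈ Ioc 0 |c|, f (q u) = 0 := fun u hu =>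
    hfβ _ <| by
      have : u ^ 2 ≤ c ^ 2 := sq_le_sq.2 ((abs_of_pos hu.1).trans_le hu.2)
      simp only [hq]
      linarith
  calc ∫⁻ r, f (β + 2 * c * r + r ^ 2) * ENNReal.ofReal |r|⁻¹
      = ∫⁻ u, f (q u) * ENNReal.ofReal |u - c|⁻¹ := by
        rw [← lintegral_sub_right_eq_self _ c]
        refine lintegral_congr fun u => ?_
        simp only [hq]
        ring_nf
    _ = ∫⁻ u in Ioi 0, f (q u) * (ENNReal.ofReal |u - c|⁻¹ + ENNReal.ofReal |u + c|⁻¹) := by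
        rw [lintegral_eq_lintegral_Ioi_add_lintegral_Ioi_neg, ← lintegral_add_left (by fun_prop)]
        refine lintegral_congr fun u => ?_
        rw [show q (-u) = q u by simp only [hq, neg_sq], ← neg_add', abs_neg, mul_add]
    _ = ∫⁻ u in Ioi |c|, f (q u) * (ENNReal.ofReal |u - c|⁻¹ + ENNReal.ofReal |u + c|⁻¹) := by
        rw [← Ioc_union_Ioi_eq_Ioi (abs_nonneg c), lintegral_union measurableSet_Ioi
            Ioc_disjoint_Ioi_same, setLIntegral_eq_zero measurableSet_Ioc fun u hu => ?_, zero_add]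
        simp only [hvanish u hu, zero_mul, Pi.zero_apply]
    _ = ∫⁻ p in Ioi β, f p * ENNReal.ofReal (p - β)⁻¹ := by
        rw [← himage, lintegral_image_eq_lintegral_abs_deriv_mul measurableSet_Ioi hderiv hinj]
        refine setLIntegral_congr_fun measurableSet_Ioi fun u hu => ?_
        simp only [ofReal_inv_abs_sub_add_ofReal_inv_abs_add hu]
        rw [mul_left_comm, show q u - β = u ^ 2 - c ^ 2 by simp only [hq]; ring]

variable {E : Type*} [NormedAddCommGroup E] [InnerProductSpace ℝ E] [FiniteDimensional ℝ E]
  [MeasurableSpace E] [BorelSpace E] (μ : Measure E) [μ.IsAddHaarMeasure]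

theorem lintegral_eq_lintegral_toSphere [Nontrivial E] {g : E → ℝ≥0∞} (hg : Measurable g) :
    ∫⁻ x, g x ∂μ = ∫⁻ θ, ∫⁻ r in Ioi (0 : ℝ),
      ENNReal.ofReal (r ^ (finrank ℝ E - 1)) * g (r • (θ : E)) ∂volume ∂μ.toSphere := by
  have hpolar := μ.measurePreserving_homeomorphUnitSphereProd.lintegral_comp_emb
    (Homeomorph.measurableEmbedding _) (fun p => g ((p.2 : ℝ) • (p.1 : E)))
  have hinv : ∀ x : ({0}ᶜ : Set E), ((homeomorphUnitSphereProd E x).2 : ℝ) •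
      ((homeomorphUnitSphereProd E x).1 : E) = x := fun x =>
    congrArg Subtype.val ((homeomorphUnitSphereProd E).symm_apply_apply x)
  simp only [hinv] at hpolar
  have hzero : ∫⁻ x, g x ∂μ = ∫⁻ x in {0}ᶜ, g x ∂μ := by rw [restrict_compl_singleton]
  rw [hzero, ← lintegral_subtype_comap (measurableSet_singleton _).compl, hpolar,
    lintegral_prod _ (by fun_prop)]
  refine lintegral_congr fun θ => ?_
  rw [Measure.volumeIoiPow,
    lintegral_withDensity_eq_lintegral_mul _ (by fun_prop) (by fun_prop)]
  exact lintegral_subtype_comap measurableSet_Ioi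
    (fun r : ℝ => ENNReal.ofReal (r ^ (finrank ℝ E - 1)) * g (r • (θ : E)))

theorem two_mul_lintegral_eq_lintegral_toSphere [Nontrivial E] {g : E → ℝ≥0∞}
    (hg : Measurable g) :
    2 * ∫⁻ x, g x ∂μ = ∫⁻ θ, ∫⁻ r : ℝ,
      ENNReal.ofReal (|r| ^ (finrank ℝ E - 1)) * g (r • (θ : E)) ∂volume ∂μ.toSphere := by
  rw [two_mul, lintegral_eq_lintegral_toSphere μ hg]
  nth_rw 2 [← lintegral_eq_lintegral_toSphere μ hg, ← lintegral_neg_eq_self]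
  rw [lintegral_eq_lintegral_toSphere μ (g := fun x => g (-x)) (by fun_prop),
    ← lintegral_add_left (by fun_prop)]
  refine lintegral_congr fun θ => ?_
  rw [lintegral_eq_lintegral_Ioi_add_lintegral_Ioi_neg]
  congr 1 <;> refine setLIntegral_congr_fun measurableSet_Ioi fun r hr => ?_ <;>
    simp [abs_of_pos (mem_Ioi.1 hr)]

theorem lintegral_radial_kernel [Nontrivial E] {f : ℝ → ℝ≥0∞} (hf : Measurable f) {b : E}
    (hfb : ∀ p ≤ ‖b‖ ^ 2, f p = 0) :
    2 * ∫⁻ w, f (‖w‖ ^ 2) * ENNReal.ofReal (‖w - b‖ ^ finrank ℝ E)⁻¹ ∂μ =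
      (∫⁻ p in Ioi (‖b‖ ^ 2), f p * ENNReal.ofReal (p - ‖b‖ ^ 2)⁻¹) * μ.toSphere univ := by
  set g : E → ℝ≥0∞ := fun v => f (‖v + b‖ ^ 2) * ENNReal.ofReal (‖v‖ ^ finrank ℝ E)⁻¹ with hg
  have hray : ∀ (θ : sphere (0 : E) 1) (r : ℝ),
      ENNReal.ofReal (|r| ^ (finrank ℝ E - 1)) * g (r • (θ : E)) =
        f (‖b‖ ^ 2 + 2 * ⟪b, (θ : E)⟫ * r + r ^ 2) * ENNReal.ofReal |r|⁻¹ := by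
    intro θ r
    rcases eq_or_ne r 0 with rfl | hr
    · simp [hg, hfb]
    have hnorm : ‖r • (θ : E)‖ = |r| := by simp [norm_smul]
    have hr' : |r| ≠ 0 := abs_ne_zero.2 hr
    rw [hg, mul_left_comm, ← ENNReal.ofReal_mul (by positivity), norm_add_sq_real, hnorm, sq_abs,
      real_inner_smul_left, real_inner_comm]
    congr 2
    · ring
    · nth_rw 2 [← Nat.sub_add_cancel (finrank_pos (R := ℝ) (M := E))]
      rw [pow_succ]
      field_simp
  calc 2 * ∫⁻ w, f (‖w‖ ^ 2) * ENNReal.ofReal (‖w - b‖ ^ finrank ℝ E)⁻¹ ∂μ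
      = 2 * ∫⁻ v, g v ∂μ := by
        rw [← lintegral_add_right_eq_self _ b]
        simp only [hg, add_sub_cancel_right]
    _ = _ := by
        rw [two_mul_lintegral_eq_lintegral_toSphere μ (by fun_prop), ← lintegral_const]
        exact lintegral_congr fun θ => by simp only [hray, lintegral_chord hf hfb]

theorem integral_radial_kernel [Nontrivial E] {f : ℝ → ℝ} (hf : Measurable f) (hf₀ : ∀ p, 0 ≤ f p)
    {b : E} (hfb : ∀ p ≤ ‖b‖ ^ 2, f p = 0) :
    ∫ w, f (‖w‖ ^ 2) / ‖w - b‖ ^ finrank ℝ E ∂μ =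
      μ.toSphere.real univ / 2 * ∫ p in Ioi (‖b‖ ^ 2), f p / (p - ‖b‖ ^ 2) := by
  have h := congrArg ENNReal.toReal (lintegral_radial_kernel μ (b := b)
    (f := fun p => ENNReal.ofReal (f p)) (by fun_prop) (fun p hp => by simp [hfb p hp]))
  simp_rw [← ENNReal.ofReal_mul (hf₀ _), ← div_eq_mul_inv] at h
  rw [ENNReal.toReal_mul, ENNReal.toReal_mul, ENNReal.toReal_ofNat, ← Measure.real] at h
  rw [integral_eq_lintegral_of_nonneg_ae
      (Eventually.of_forall fun w => div_nonneg (hf₀ _) (by positivity))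
      (Measurable.aestronglyMeasurable (by fun_prop)),
    integral_eq_lintegral_of_nonneg_ae
      ((ae_restrict_mem measurableSet_Ioi).mono fun p hp =>
        div_nonneg (hf₀ _) (sub_nonneg.2 (le_of_lt hp)))
      (Measurable.aestronglyMeasurable (by fun_prop))]
  linarith

theorem integral_norm_rpow_tail [Nontrivial E] {a ρ : ℝ} (ha : 0 < a) (hρ : 0 < ρ) :
    ∫ y in {y : E | ρ ≤ ‖y‖}, (‖y‖ ^ (finrank ℝ E + a))⁻¹ ∂μ =
      μ.toSphere.real univ * (ρ ^ (-a) / a) := by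
  have hm : MeasurableSet {y : E | ρ ≤ ‖y‖} := measurableSet_le measurable_const measurable_norm
  have hradial : {y : E | ρ ≤ ‖y‖}.indicator (fun y => (‖y‖ ^ (finrank ℝ E + a))⁻¹) =
      fun y => (Ici ρ).indicator (fun r => (r ^ (finrank ℝ E + a))⁻¹) ‖y‖ := by
    ext y
    simp [indicator]
  have hpow : EqOn (fun r : ℝ => r ^ (finrank ℝ E - 1) * (r ^ (finrank ℝ E + a))⁻¹)
      (fun r => r ^ (-1 - a)) (Ioi ρ) := fun r hr => by
    have hr₀ : 0 < r := hρ.trans hr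
    simp only
    rw [← Real.rpow_natCast, Nat.cast_sub finrank_pos, ← Real.rpow_neg hr₀.le,
      ← Real.rpow_add hr₀]
    congr 1
    push_cast
    ring
  rw [← integral_indicator hm, hradial, integral_fun_norm_addHaar, Measure.toSphere_real_apply_univ,
    nsmul_eq_mul, smul_eq_mul, mul_assoc]
  congr 2
  simp_rw [smul_eq_mul, ← indicator_mul_right _ (fun r : ℝ => r ^ (finrank ℝ E - 1))]
  rw [setIntegral_indicator measurableSet_Ici, inter_eq_right.2 (Ici_subset_Ioi.2 hρ),
    integral_Ici_eq_integral_Ioi, setIntegral_congr_fun measurableSet_Ioi hpow,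
    integral_Ioi_rpow_of_lt (by linarith) hρ, show -1 - a + 1 = -a by ring, neg_div_neg_eq]

lemma toSphere_real_univ_pos [Nontrivial E] : 0 < μ.toSphere.real univ :=
  ENNReal.toReal_pos (Measure.measure_univ_ne_zero.2 μ.toSphere_ne_zero) (measure_ne_top _ _)

theorem integrableOn_norm_rpow_tail [Nontrivial E] {a ρ : ℝ} (ha : 0 < a) (hρ : 0 < ρ) :
    IntegrableOn (fun y : E => (‖y‖ ^ (finrank ℝ E + a))⁻¹) {y | ρ ≤ ‖y‖} μ := by
  apply Integrable.of_integral_ne_zero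
  rw [integral_norm_rpow_tail μ ha hρ]
  have := toSphere_real_univ_pos μ
  positivity

lemma toSphere_real_univ_euclideanSpace (n : ℕ) [NeZero n] :
    (volume : Measure (EuclideanSpace ℝ (Fin n))).toSphere.real univ =
      2 * Real.pi ^ ((n : ℝ) / 2) / Real.Gamma ((n : ℝ) / 2) := by
  have hn : (0 : ℝ) < n := by exact_mod_cast Nat.pos_of_ne_zero (NeZero.ne n)
  have hG : Real.Gamma ((n : ℝ) / 2 + 1) = (n : ℝ) / 2 * Real.Gamma ((n : ℝ) / 2) :=
    Real.Gamma_add_one (by positivity)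
  have := Real.Gamma_pos_of_pos (show 0 < (n : ℝ) / 2 by positivity)
  rw [Measure.toSphere_real_apply_univ, finrank_euclideanSpace_fin, Measure.real,
    EuclideanSpace.volume_ball]
  simp only [ENNReal.ofReal_one, one_pow, one_mul, Fintype.card_fin]
  rw [ENNReal.toReal_ofReal (by rw [hG]; positivity), hG, Real.sqrt_eq_rpow,
    ← Real.rpow_natCast, ← Real.rpow_mul Real.pi_pos.le, one_div_mul_eq_div]
  field_simp

end RadialIntegrals

section BetaIntegrals

theorem integral_beta {a b : ℝ} (ha : 0 < a) (hb : 0 < b) :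
    ∫ x in Ioo (0 : ℝ) 1, x ^ (a - 1) * (1 - x) ^ (b - 1) = ProbabilityTheory.beta a b := by
  have hint := Complex.betaIntegral_convergent (u := a) (v := b) (by simpa) (by simpa)
  rw [intervalIntegrable_iff_integrableOn_Ioc_of_le zero_le_one] at hint
  rw [ProbabilityTheory.beta_eq_betaIntegralReal a b ha hb, Complex.betaIntegral,
    intervalIntegral.integral_of_le zero_le_one, ← integral_Ioc_eq_integral_Ioo,
    ← RCLike.re_eq_complex_re, ← integral_re hint]
  refine setIntegral_congr_fun measurableSet_Ioc fun x hx => ?_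
  have hx₁ : 0 ≤ 1 - x := sub_nonneg.2 hx.2
  simp only [RCLike.re_eq_complex_re]
  rw [← Complex.ofReal_re (x ^ (a - 1) * (1 - x) ^ (b - 1)), Complex.ofReal_mul,
    Complex.ofReal_cpow hx.1.le, Complex.ofReal_cpow hx₁]
  push_cast
  rfl

theorem integral_Ioi_one_beta {a b : ℝ} (ha : 0 < a) (hb : 0 < b) :
    ∫ p in Ioi (1 : ℝ), (p - 1) ^ (b - 1) * p ^ (-(a + b)) = ProbabilityTheory.beta a b := by
  have himage : Inv.inv '' Ioo (0 : ℝ) 1 = Ioi 1 := by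
    rw [image_inv_eq_inv, inv_Ioo_0_left one_pos, inv_one]
  rw [← himage, integral_image_eq_integral_abs_deriv_smul measurableSet_Ioo
    (fun q hq => (hasDerivAt_inv hq.1.ne').hasDerivWithinAt) inv_injective.injOn,
    ← integral_beta ha hb]
  refine setIntegral_congr_fun measurableSet_Ioo fun q hq => ?_
  have hq₀ : 0 < q := hq.1
  have hq₁ : 0 < 1 - q := sub_pos.2 hq.2
  simp only [smul_eq_mul, abs_neg]
  rw [abs_of_pos (by positivity), show q⁻¹ - 1 = (1 - q) / q by field_simp,
    Real.div_rpow hq₁.le hq₀.le, Real.inv_rpow hq₀.le, Real.rpow_neg hq₀.le, inv_inv,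
    Real.rpow_add hq₀, Real.rpow_sub hq₀ b, Real.rpow_sub hq₀ a, Real.rpow_one]
  field_simp

theorem integral_rpow_div_add {s γ : ℝ} (hs : s ∈ Ioo (0 : ℝ) 1) (hγ : 0 < γ) :
    ∫ t in Ioi (0 : ℝ), γ * t ^ (s - 1) / (t + γ) =
      γ ^ s * (Real.Gamma s * Real.Gamma (1 - s)) := by
  have hbeta := integral_Ioi_one_beta (sub_pos.2 hs.2) hs.1
  rw [ProbabilityTheory.beta, sub_add_cancel, Real.Gamma_one, div_one] at hbeta
  have hscale := integral_comp_mul_left_Ioi (fun t => γ * t ^ (s - 1) / (t + γ)) 0 hγ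
  have hshift := (measurePreserving_sub_right volume (1 : ℝ)).setIntegral_preimage_emb
    (MeasurableEquiv.subRight 1).measurableEmbedding
    (fun u => γ * (γ * u) ^ (s - 1) / (γ * u + γ)) (Ioi 0)
  have hcongr : ∫ p in Ioi (1 : ℝ), γ * (γ * (p - 1)) ^ (s - 1) / (γ * (p - 1) + γ) =
      ∫ p in Ioi (1 : ℝ), γ ^ (s - 1) * ((p - 1) ^ (s - 1) * p ^ (-1 : ℝ)) := by
    refine setIntegral_congr_fun measurableSet_Ioi fun p hp => ?_
    have hp0 : 0 < p := one_pos.trans hp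
    simp only [Real.mul_rpow hγ.le (sub_pos.2 hp).le, Real.rpow_neg_one,
      show γ * (p - 1) + γ = γ * p by ring]
    field_simp
  rw [preimage_sub_const_Ioi, zero_add, hcongr, integral_const_mul, hbeta] at hshift
  rw [mul_zero, ← hshift, smul_eq_mul, eq_inv_mul_iff_mul_eq₀ hγ.ne'] at hscale
  rw [← hscale, Real.rpow_sub_one hγ.ne']
  field_simp

theorem integrableOn_rpow_div_add {s γ : ℝ} (hs : s ∈ Ioo (0 : ℝ) 1) (hγ : 0 < γ) :
    IntegrableOn (fun t => γ * t ^ (s - 1) / (t + γ)) (Ioi (0 : ℝ)) := by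
  apply Integrable.of_integral_ne_zero
  rw [integral_rpow_div_add hs hγ]
  have := Real.Gamma_pos_of_pos hs.1
  have := Real.Gamma_pos_of_pos (sub_pos.2 hs.2)
  positivity

end BetaIntegrals

section Kernels

variable {E : Type*} [NormedAddCommGroup E]

/-- The kernel `(1 - |x|²)₊ˢ / |x - b|ⁿ` with pole `b`, where `n` is the dimension of the space.
For `|b| > 1` its fractional Laplacian in the unit ball is explicit. -/
noncomputable def ballKernel [Module ℝ E] (s : ℝ) (b x : E) : ℝ :=
  max (1 - ‖x‖ ^ 2) 0 ^ s / ‖x - b‖ ^ finrank ℝ E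

/-- The kernel `(|v|² - 1)₊ˢ / |v - b|ⁿ` with pole `b`, into which an inversion centred in the unit
ball transforms a `ballKernel`. -/
noncomputable def exteriorKernel [Module ℝ E] (s : ℝ) (b v : E) : ℝ :=
  max (‖v‖ ^ 2 - 1) 0 ^ s / ‖v - b‖ ^ finrank ℝ E

lemma continuous_div_of_eventuallyEq_zero {X : Type*} [TopologicalSpace X] {f g : X → ℝ}
    (hf : Continuous f) (hg : Continuous g) (h : ∀ x, g x = 0 → f =ᶠ[𝓝 x] 0) :
    Continuous fun x => f x / g x := by
  refine continuous_iff_continuousAt.2 fun x => ?_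
  by_cases hx : g x = 0
  · refine (continuousAt_const (y := (0 : ℝ))).congr ?_
    filter_upwards [h x hx] with y hy
    rw [hy, Pi.zero_apply, zero_div]
  · exact hf.continuousAt.div hg.continuousAt hx

section Module

variable [Module ℝ E] {s : ℝ}

lemma ballKernel_nonneg (s : ℝ) (b x : E) : 0 ≤ ballKernel s b x := by
  unfold ballKernel; positivity

lemma ballKernel_eq_zero (hs : 0 < s) (b : E) {x : E} (hx : x ∉ ball (0 : E) 1) :
    ballKernel s b x = 0 := by
  have hx1 : 1 ≤ ‖x‖ := by simpa using hx
  rw [ballKernel, max_eq_right (by nlinarith), Real.zero_rpow hs.ne', zero_div]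

lemma continuous_ballKernel (hs : 0 < s) {b : E} (hb : 1 < ‖b‖) : Continuous (ballKernel s b) := by
  refine continuous_div_of_eventuallyEq_zero (.rpow_const (by fun_prop) fun _ => .inr hs.le)
    (by fun_prop) fun x hx => ?_
  obtain rfl : x = b := by simpa [sub_eq_zero] using eq_zero_of_pow_eq_zero hx
  filter_upwards [continuous_norm.continuousAt.eventually_const_lt hb] with y hy
  rw [max_eq_right (by nlinarith), Real.zero_rpow hs.ne', Pi.zero_apply]

lemma continuous_exteriorKernel (hs : 0 < s) {b : E} (hb : ‖b‖ < 1) :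
    Continuous (exteriorKernel s b) := by
  refine continuous_div_of_eventuallyEq_zero (.rpow_const (by fun_prop) fun _ => .inr hs.le)
    (by fun_prop) fun x hx => ?_
  obtain rfl : x = b := by simpa [sub_eq_zero] using eq_zero_of_pow_eq_zero hx
  filter_upwards [continuous_norm.continuousAt.eventually_lt_const hb] with y hy
  rw [max_eq_right (by nlinarith [norm_nonneg y]), Real.zero_rpow hs.ne', Pi.zero_apply]

end Module
end Kernels

section ExteriorKernelMass

lemma intervalIntegral_rpow_div_add {s γ T : ℝ} (hs : s ∈ Ioo (0 : ℝ) 1) (hγ : 0 < γ)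
    (hT : 0 ≤ T) :
    ∫ t in (0 : ℝ)..T, t ^ s / (t + γ) =
      T ^ s / s - ∫ t in (0 : ℝ)..T, γ * t ^ (s - 1) / (t + γ) := by
  have hpow : T ^ s / s = ∫ t in (0 : ℝ)..T, t ^ (s - 1) := by
    rw [integral_rpow (Or.inl (by linarith [hs.1])), sub_add_cancel, Real.zero_rpow hs.1.ne',
      sub_zero]
  rw [hpow, ← intervalIntegral.integral_sub
    (intervalIntegral.intervalIntegrable_rpow' (by linarith [hs.1]))
    ((intervalIntegrable_iff_integrableOn_Ioc_of_le hT).2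
      ((integrableOn_rpow_div_add hs hγ).mono_set Ioc_subset_Ioi_self)),
    intervalIntegral.integral_of_le hT, intervalIntegral.integral_of_le hT]
  refine setIntegral_congr_fun measurableSet_Ioc fun t ht => ?_
  have ht₀ : 0 < t := ht.1
  simp only [Real.rpow_sub_one ht₀.ne']
  field_simp
  ring

variable {E : Type*} [NormedAddCommGroup E] [InnerProductSpace ℝ E] [FiniteDimensional ℝ E]
  [MeasurableSpace E] [BorelSpace E] (μ : Measure E) [μ.IsAddHaarMeasure]

theorem integral_exteriorKernel_closedBall [Nontrivial E] {s : ℝ} (hs : s ∈ Ioo (0 : ℝ) 1) {b : E}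
    (hb : ‖b‖ < 1) {R : ℝ} (hR : 1 < R) :
    ∫ v in closedBall 0 R, exteriorKernel s b v ∂μ = μ.toSphere.real univ / 2 *
      ((R ^ 2 - 1) ^ s / s -
        ∫ t in (0 : ℝ)..(R ^ 2 - 1), (1 - ‖b‖ ^ 2) * t ^ (s - 1) / (t + (1 - ‖b‖ ^ 2))) := by
  have hb₂ : ‖b‖ ^ 2 < 1 := by nlinarith [norm_nonneg b]
  have hR₂ : 1 < R ^ 2 := by nlinarith
  set F : ℝ → ℝ := (Ioc 1 (R ^ 2)).indicator fun p => (p - 1) ^ s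
  have hker : (closedBall 0 R).indicator (exteriorKernel s b) =
      fun v => F (‖v‖ ^ 2) / ‖v - b‖ ^ finrank ℝ E := by
    ext v
    have hv : v ∈ closedBall 0 R ↔ ‖v‖ ^ 2 ≤ R ^ 2 := by
      rw [mem_closedBall_zero_iff, sq_le_sq₀ (norm_nonneg v) (by linarith)]
    rcases le_or_gt (‖v‖ ^ 2) 1 with h1 | h1
    · simp [F, exteriorKernel, indicator, h1.not_gt, h1, hs.1.ne']
    · simp [F, exteriorKernel, indicator, hv, h1, max_eq_left (sub_pos.2 h1).le, ite_div]
  rw [← integral_indicator measurableSet_closedBall, hker, integral_radial_kernel μ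
    (Measurable.indicator (by fun_prop) measurableSet_Ioc)
    (indicator_nonneg fun p hp => Real.rpow_nonneg (sub_pos.2 hp.1).le _)
    fun p hp => indicator_of_notMem (fun h => (hp.trans_lt hb₂).not_gt h.1) _]
  congr 1
  have hshift := intervalIntegral.integral_comp_add_right (a := 0) (b := R ^ 2 - 1)
    (fun p => (p - 1) ^ s / (p - ‖b‖ ^ 2)) 1
  simp only [zero_add, sub_add_cancel, add_sub_cancel_right, add_sub_assoc] at hshift
  have hF : (fun p => (Ioc 1 (R ^ 2)).indicator (fun p => (p - 1) ^ s) p / (p - ‖b‖ ^ 2)) =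
      (Ioc 1 (R ^ 2)).indicator fun p => (p - 1) ^ s / (p - ‖b‖ ^ 2) := by
    ext p
    simp only [indicator, ite_div, zero_div]
  rw [← intervalIntegral_rpow_div_add hs (sub_pos.2 hb₂) (sub_pos.2 hR₂).le, hshift,
    intervalIntegral.integral_of_le hR₂.le, hF, setIntegral_indicator measurableSet_Ioc,
    inter_eq_right.2 (Ioc_subset_Ioi_self.trans (Ioi_subset_Ioi hb₂.le))]

end ExteriorKernelMass

section Recentering

lemma isBigO_sub_comp_inv_atTop {f : ℝ → ℝ} (hf : DifferentiableAt ℝ f 0) :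
    (fun R : ℝ => f R⁻¹ - f 0) =O[atTop] fun R => R⁻¹ := by
  simpa [Function.comp_def] using hf.isBigO_sub.comp_tendsto tendsto_inv_atTop_zero

lemma tendsto_rpow_mul_of_isBigO {s : ℝ} (hs : s < 1) {g : ℝ → ℝ}
    (hg : g =O[atTop] fun R => (R ^ 2)⁻¹) :
    Tendsto (fun R : ℝ => R ^ (2 * s) * g R) atTop (𝓝 0) := by
  refine ((Asymptotics.isBigO_refl _ _).mul hg).trans_tendsto ?_
  refine (tendsto_rpow_neg_atTop (y := 2 - 2 * s) (by linarith)).congr' ?_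
  filter_upwards [eventually_gt_atTop 0] with R hR
  rw [neg_sub, Real.rpow_sub hR, Real.rpow_two, div_eq_mul_inv]

lemma tendsto_rpow_sub_sq_sub_one {s : ℝ} (hs : s < 1) :
    Tendsto (fun R : ℝ => R ^ (2 * s) - (R ^ 2 - 1) ^ s) atTop (𝓝 0) := by
  have hdiff : DifferentiableAt ℝ (fun z : ℝ => -(1 - z) ^ s) 0 :=
    (DifferentiableAt.rpow_const (by fun_prop) (.inl (by norm_num))).neg
  have hO := (isBigO_sub_comp_inv_atTop hdiff).comp_tendsto (tendsto_pow_atTop two_ne_zero)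
  refine (tendsto_rpow_mul_of_isBigO hs hO).congr' ?_
  filter_upwards [eventually_gt_atTop 1] with R hR
  have hR₀ : 0 < R := one_pos.trans hR
  have hR₂ : (R ^ 2)⁻¹ ≤ 1 := inv_le_one_of_one_le₀ (by nlinarith)
  have hfac : R ^ 2 - 1 = R ^ 2 * (1 - (R ^ 2)⁻¹) := by field_simp
  rw [hfac, Real.mul_rpow (by positivity) (sub_nonneg.2 hR₂), Real.rpow_mul hR₀.le, Real.rpow_two,
    Function.comp, sub_zero, Real.one_rpow]
  ring

lemma setIntegral_mem_Icc {X : Type*} [MeasurableSpace X] {μ : Measure X} {A : Set X}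
    (hA : MeasurableSet A) (hfin : μ A ≠ ⊤) {g : X → ℝ} (hg : IntegrableOn g A μ) {m M : ℝ}
    (hmM : ∀ x ∈ A, g x ∈ Icc m M) :
    ∫ x in A, g x ∂μ ∈ Icc (m * μ.real A) (M * μ.real A) := by
  refine ⟨setIntegral_ge_of_const_le_real hA hfin (fun x hx => (hmM x hx).1) hg, ?_⟩
  have hle := setIntegral_mono_on hg (integrableOn_const hfin) hA fun x hx => (hmM x hx).2
  rwa [setIntegral_const, smul_eq_mul, mul_comm] at hle

theorem abs_setIntegral_sub_setIntegral_le {X : Type*} [MeasurableSpace X] {μ : Measure X}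
    {A B : Set X} (hA : MeasurableSet A) (hB : MeasurableSet B) (hAB : μ A = μ B) (hfin : μ A ≠ ⊤)
    {g : X → ℝ} (hgA : IntegrableOn g A μ) (hgB : IntegrableOn g B μ) {m M : ℝ}
    (hdAB : ∀ x ∈ A \ B, g x ∈ Icc m M) (hdBA : ∀ x ∈ B \ A, g x ∈ Icc m M) :
    |(∫ x in A, g x ∂μ) - ∫ x in B, g x ∂μ| ≤ (M - m) * μ.real (A \ B) := by
  have hfinB : μ B ≠ ⊤ := hAB ▸ hfin
  have hreal : μ.real (B \ A) = μ.real (A \ B) := by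
    have h1 := measureReal_inter_add_sdiff (μ := μ) (s := A) hB
    have h2 := measureReal_inter_add_sdiff (μ := μ) (s := B) hA
    have h3 : μ.real A = μ.real B := congrArg ENNReal.toReal hAB
    rw [inter_comm] at h2
    linarith
  have h1 := setIntegral_mem_Icc (hA.diff hB) (measure_ne_top_of_subset sdiff_subset hfin)
    (hgA.mono_set sdiff_subset) hdAB
  have h2 := setIntegral_mem_Icc (hB.diff hA) (measure_ne_top_of_subset sdiff_subset hfinB)
    (hgB.mono_set sdiff_subset) hdBA
  rw [hreal] at h2
  rw [← integral_inter_add_sdiff hB hgA, ← integral_inter_add_sdiff hA hgB, inter_comm B A,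
    add_sub_add_left_eq_sub, abs_le]
  constructor <;> nlinarith [h1.1, h1.2, h2.1, h2.2]

/-- Upper minus lower bound of an exterior kernel on the annulus `R - 1 ≤ |v| ≤ R + 1` in dimension
`n`; times the volume of the annulus it tends to `0`, so that a large ball may be recentred. -/
noncomputable def annulusOsc (n : ℕ) (s R : ℝ) : ℝ :=
  ((R + 2) ^ 2) ^ s / (R - 2) ^ n - ((R - 2) ^ 2) ^ s / (R + 2) ^ n

lemma tendsto_annulusOsc_mul (n : ℕ) {s : ℝ} (hs : s < 1) :
    Tendsto (fun R : ℝ => annulusOsc n s R * ((R + 1) ^ n - R ^ n)) atTop (𝓝 0) := by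
  set A : ℝ → ℝ := fun z =>
    ((1 + 2 * z) ^ 2) ^ s / (1 - 2 * z) ^ n - ((1 - 2 * z) ^ 2) ^ s / (1 + 2 * z) ^ n
  set B : ℝ → ℝ := fun z => (1 + z) ^ n
  have hA : DifferentiableAt ℝ A 0 := by
    refine .sub (.div (.rpow_const (by fun_prop) (.inl (by norm_num))) (by fun_prop) (by norm_num))
      (.div (.rpow_const (by fun_prop) (.inl (by norm_num))) (by fun_prop) (by norm_num))
  have hO := (isBigO_sub_comp_inv_atTop hA).mul
    (isBigO_sub_comp_inv_atTop (f := B) (by fun_prop))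
  simp only [← sq, inv_pow] at hO
  refine (tendsto_rpow_mul_of_isBigO hs hO).congr' ?_
  filter_upwards [eventually_gt_atTop 2] with R hR
  have hR₀ : 0 < R := two_pos.trans hR
  have hA₀ : A 0 = 0 := by simp [A]
  have hB₀ : B 0 = 1 := by simp [B]
  have e1 : R + 2 = R * (1 + 2 * R⁻¹) := by field_simp
  have e2 : R - 2 = R * (1 - 2 * R⁻¹) := by field_simp
  have e3 : R + 1 = R * (1 + R⁻¹) := by field_simp
  have hRn : R ^ n ≠ 0 := by positivity
  rw [hA₀, hB₀, annulusOsc, e1, e2, e3, Real.rpow_mul hR₀.le, Real.rpow_two]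
  simp only [A, B, mul_pow, sub_zero]
  rw [Real.mul_rpow (by positivity) (by positivity), Real.mul_rpow (by positivity) (by positivity)]
  field_simp

variable {E : Type*} [NormedAddCommGroup E] [NormedSpace ℝ E]

lemma exteriorKernel_mem_Icc {s R : ℝ} (hs : 0 ≤ s) {b v : E} (hb : ‖b‖ < 1) (hR : 2 < R)
    (hv : ‖v‖ ∈ Icc (R - 1) (R + 1)) :
    exteriorKernel s b v ∈ Icc (((R - 2) ^ 2) ^ s / (R + 2) ^ finrank ℝ E)
      (((R + 2) ^ 2) ^ s / (R - 2) ^ finrank ℝ E) := by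
  have hle : ‖v - b‖ ≤ R + 2 := (norm_sub_le v b).trans (by linarith [hv.2])
  have hge : R - 2 ≤ ‖v - b‖ := le_trans (by linarith [hv.1]) (norm_sub_norm_le v b)
  have hR₂ : 0 < R - 2 := sub_pos.2 hR
  have hpos : 0 < ‖v - b‖ := hR₂.trans_le hge
  have hmax_ge : (R - 2) ^ 2 ≤ max (‖v‖ ^ 2 - 1) 0 := le_max_of_le_left (by nlinarith [hv.1])
  have hmax_le : max (‖v‖ ^ 2 - 1) 0 ≤ (R + 2) ^ 2 :=
    max_le (by nlinarith [hv.2, norm_nonneg v]) (by positivity)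
  unfold exteriorKernel
  constructor <;> gcongr

variable {F : Type*} [NormedAddCommGroup F] [InnerProductSpace ℝ F] [FiniteDimensional ℝ F]
  [MeasurableSpace F] [BorelSpace F] (μ : Measure F) [μ.IsAddHaarMeasure]

theorem tendsto_integral_exteriorKernel_closedBall_sub {s : ℝ} (hs : s ∈ Ioo (0 : ℝ) 1)
    {b x : F} (hb : ‖b‖ < 1) (hx : ‖x‖ ≤ 1) :
    Tendsto (fun R : ℝ => (∫ v in closedBall x R, exteriorKernel s b v ∂μ) -
      ∫ v in closedBall 0 R, exteriorKernel s b v ∂μ) atTop (𝓝 0) := by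
  have hlim := (tendsto_annulusOsc_mul (finrank ℝ F) hs.2).mul_const (μ.real (ball 0 1))
  rw [zero_mul] at hlim
  refine squeeze_zero_norm' ?_ hlim
  filter_upwards [eventually_gt_atTop 2] with R hR
  have hint (z : F) : IntegrableOn (exteriorKernel s b) (closedBall z R) μ :=
    (continuous_exteriorKernel hs.1 hb).continuousOn.integrableOn_compact (isCompact_closedBall z R)
  have hAB : ∀ v ∈ closedBall x R \ closedBall 0 R, ‖v‖ ∈ Icc (R - 1) (R + 1) := fun v hv => by
    rw [Set.mem_sdiff, mem_closedBall_zero_iff, mem_closedBall_iff_norm, not_le] at hv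
    exact ⟨by linarith [hv.2], by linarith [hv.1, norm_sub_norm_le v x]⟩
  have hBA : ∀ v ∈ closedBall 0 R \ closedBall x R, ‖v‖ ∈ Icc (R - 1) (R + 1) := fun v hv => by
    rw [Set.mem_sdiff, mem_closedBall_zero_iff, mem_closedBall_iff_norm, not_le] at hv
    exact ⟨by linarith [hv.2, norm_sub_le v x], by linarith [hv.1]⟩
  have hosc := abs_setIntegral_sub_setIntegral_le measurableSet_closedBall measurableSet_closedBall
    (Measure.addHaar_closedBall_center μ x R) measure_closedBall_lt_top.ne (hint x) (hint 0)
    (fun v hv => exteriorKernel_mem_Icc hs.1.le hb hR (hAB v hv))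
    (fun v hv => exteriorKernel_mem_Icc hs.1.le hb hR (hBA v hv))
  have hvol : μ.real (closedBall x R \ closedBall 0 R) ≤
      ((R + 1) ^ finrank ℝ F - R ^ finrank ℝ F) * μ.real (ball 0 1) := by
    rw [sub_mul, ← Measure.addHaar_real_closedBall μ 0 (by linarith : 0 ≤ R + 1),
      ← Measure.addHaar_real_closedBall μ 0 (by linarith : 0 ≤ R),
      ← measureReal_sdiff (closedBall_subset_closedBall (by linarith)) measurableSet_closedBall
        (h₁ := measure_closedBall_lt_top.ne)]
    exact measureReal_mono (fun v hv => ⟨mem_closedBall_zero_iff.2 (hAB v hv).2, hv.2⟩)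
      (measure_ne_top_of_subset sdiff_subset measure_closedBall_lt_top.ne)
  have hosc₀ : 0 ≤ annulusOsc (finrank ℝ F) s R := by
    have : 0 < R - 2 := sub_pos.2 hR
    have := hs.1
    rw [annulusOsc, sub_nonneg]
    gcongr <;> linarith
  calc _ ≤ annulusOsc (finrank ℝ F) s R * μ.real (closedBall x R \ closedBall 0 R) := hosc
    _ ≤ annulusOsc (finrank ℝ F) s R *
        (((R + 1) ^ finrank ℝ F - R ^ finrank ℝ F) * μ.real (ball 0 1)) := by gcongr
    _ = _ := by ring

theorem tendsto_sub_integral_exteriorKernel [Nontrivial F] {s : ℝ} (hs : s ∈ Ioo (0 : ℝ) 1)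
    {b x : F} (hb : ‖b‖ < 1) (hx : ‖x‖ ≤ 1) :
    Tendsto (fun R : ℝ => μ.toSphere.real univ * (R ^ (2 * s) / (2 * s)) -
      ∫ v in closedBall x R, exteriorKernel s b v ∂μ) atTop (𝓝 (μ.toSphere.real univ / 2 *
        ((1 - ‖b‖ ^ 2) ^ s * (Real.Gamma s * Real.Gamma (1 - s))))) := by
  have hb₂ : 0 < 1 - ‖b‖ ^ 2 := by nlinarith [norm_nonneg b]
  have hmass := intervalIntegral_tendsto_integral_Ioi 0 (integrableOn_rpow_div_add hs hb₂)
    (tendsto_atTop_add_const_right _ (-1) (tendsto_pow_atTop (α := ℝ) two_ne_zero))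
  rw [integral_rpow_div_add hs hb₂] at hmass
  have hlim := ((tendsto_rpow_sub_sq_sub_one hs.2).const_mul (μ.toSphere.real univ / (2 * s))).add
    ((hmass.const_mul (μ.toSphere.real univ / 2)).sub
      (tendsto_integral_exteriorKernel_closedBall_sub μ hs hb hx))
  simp only [mul_zero, sub_zero, zero_add] at hlim
  refine hlim.congr' ?_
  filter_upwards [eventually_gt_atTop 1] with R hR
  rw [integral_exteriorKernel_closedBall μ hs hb hR]
  have := hs.1.ne'
  simp only [← sub_eq_add_neg]
  field_simp
  ring

end Recentering

section Conjugation

variable {E : Type*} [NormedAddCommGroup E] [InnerProductSpace ℝ E] {s : ℝ} {x b w : E}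

/-- The image of the pole `b` under the inversion `x + w ↦ x + ((‖x‖² - 1) / ‖w‖²) w`, which
preserves the unit sphere. -/
noncomputable def conjPoint (x b : E) : E :=
  x + ((1 - ‖x‖ ^ 2) / ‖x - b‖ ^ 2) • (x - b)

lemma one_sub_norm_conjPoint_sq (hxb : x ≠ b) :
    1 - ‖conjPoint x b‖ ^ 2 = (1 - ‖x‖ ^ 2) * (‖b‖ ^ 2 - 1) / ‖x - b‖ ^ 2 := by
  have hd : ‖x - b‖ ≠ 0 := norm_ne_zero_iff.2 (sub_ne_zero.2 hxb)
  have hb : ‖b‖ ^ 2 = ‖x‖ ^ 2 - 2 * ⟪x, x - b⟫ + ‖x - b‖ ^ 2 := by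
    rw [← norm_sub_sq_real, sub_sub_cancel]
  rw [conjPoint, norm_add_sq_real, real_inner_smul_right, norm_smul, hb, mul_pow, Real.norm_eq_abs,
    sq_abs]
  field_simp
  ring

lemma one_sub_norm_add_inversion_sq (x : E) (hw : w ≠ 0) :
    1 - ‖x + ((‖x‖ ^ 2 - 1) / ‖w‖ ^ 2) • w‖ ^ 2 =
      (‖x‖ ^ 2 - 1) / ‖w‖ ^ 2 * (1 - ‖x + w‖ ^ 2) := by
  have hd : ‖w‖ ≠ 0 := norm_ne_zero_iff.2 hw
  rw [norm_add_sq_real, norm_add_sq_real, real_inner_smul_right, norm_smul, mul_pow,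
    Real.norm_eq_abs, sq_abs]
  field_simp
  ring

lemma norm_add_inversion_sub (hxb : x ≠ b) (hw : w ≠ 0) :
    ‖x + ((‖x‖ ^ 2 - 1) / ‖w‖ ^ 2) • w - b‖ = ‖x - b‖ / ‖w‖ * ‖x + w - conjPoint x b‖ := by
  have hd : ‖x - b‖ ≠ 0 := norm_ne_zero_iff.2 (sub_ne_zero.2 hxb)
  have hw' : ‖w‖ ≠ 0 := norm_ne_zero_iff.2 hw
  rw [← sq_eq_sq₀ (norm_nonneg _) (by positivity), mul_pow, conjPoint, add_sub_add_left_eq_sub,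
    add_sub_right_comm]
  generalize x - b = d at hd ⊢
  rw [norm_add_sq_real, norm_sub_sq_real, real_inner_smul_right,
    real_inner_smul_right, norm_smul, norm_smul, mul_pow, mul_pow,
    Real.norm_eq_abs, Real.norm_eq_abs, sq_abs, sq_abs, real_inner_comm w d]
  field_simp
  ring

lemma norm_div_norm_sq_smul (k : ℝ) (w : E) : ‖(k / ‖w‖ ^ 2) • w‖ = |k| / ‖w‖ := by
  rw [norm_smul, norm_div, norm_pow, norm_norm, Real.norm_eq_abs, sq, div_mul_eq_mul_div,
    mul_div_mul_comm]
  rcases eq_or_ne ‖w‖ 0 with hw | hw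
  · simp [hw]
  · rw [div_self hw, mul_one]

lemma max_mul_div_pow_eq {k w D N p : ℝ} (s : ℝ) (d : ℕ) (hk : 0 ≤ k) :
    max (k * p) 0 ^ s / (D / w * N) ^ d = k ^ s * (w / D) ^ d * (max p 0 ^ s / N ^ d) := by
  rw [show max (k * p) 0 = k * max p 0 by rw [mul_max_of_nonneg _ _ hk, mul_zero],
    Real.mul_rpow hk (le_max_right _ _), mul_pow, ← inv_div D w, inv_pow]
  ring

lemma ballKernel_inversion_of_norm_lt (s : ℝ) (hx : ‖x‖ ≤ 1) (hxb : x ≠ b) (hw : w ≠ 0) :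
    ballKernel s b (x + ((‖x‖ ^ 2 - 1) / ‖w‖ ^ 2) • w) =
      ((1 - ‖x‖ ^ 2) / ‖w‖ ^ 2) ^ s * (‖w‖ / ‖x - b‖) ^ finrank ℝ E *
        exteriorKernel s (conjPoint x b) (x + w) := by
  have hx₂ : 0 ≤ 1 - ‖x‖ ^ 2 := by nlinarith [norm_nonneg x]
  rw [ballKernel, one_sub_norm_add_inversion_sq x hw, norm_add_inversion_sub hxb hw, exteriorKernel,
    ← max_mul_div_pow_eq s _ (by positivity)]
  ring_nf

lemma ballKernel_inversion_of_lt_norm (s : ℝ) (hx : 1 ≤ ‖x‖) (hxb : x ≠ b) (hw : w ≠ 0) :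
    ballKernel s b (x + ((‖x‖ ^ 2 - 1) / ‖w‖ ^ 2) • w) =
      ((‖x‖ ^ 2 - 1) / ‖w‖ ^ 2) ^ s * (‖w‖ / ‖x - b‖) ^ finrank ℝ E *
        ballKernel s (conjPoint x b) (x + w) := by
  have hx₂ : 0 ≤ ‖x‖ ^ 2 - 1 := by nlinarith
  rw [ballKernel, one_sub_norm_add_inversion_sq x hw, norm_add_inversion_sub hxb hw, ballKernel,
    ← max_mul_div_pow_eq s _ (by positivity)]

lemma ballKernel_neg_one_div_norm_sq_smul (s : ℝ) {e : E} (he : ‖e‖ = 1) (hw : w ≠ 0) :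
    ballKernel s e ((-1 / ‖w‖ ^ 2) • w) = (1 / ‖w‖ ^ 2) ^ s * ‖w‖ ^ finrank ℝ E *
      (max (‖w‖ ^ 2 - 1) 0 ^ s / ‖w + e‖ ^ finrank ℝ E) := by
  have he₀ : (0 : E) ≠ e := by rintro rfl; simp at he
  simpa [exteriorKernel, conjPoint, he] using ballKernel_inversion_of_norm_lt s (by simp) he₀ hw

lemma inversion_factor_mul {k w D : ℝ} (hk : 0 < k) (hw : 0 < w) (s : ℝ) (d : ℕ) :
    k ^ d / w ^ (2 * d) * ((k / w ^ 2) ^ s * (w / D) ^ d / (k / w) ^ ((d : ℝ) + 2 * s)) =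
      k ^ (-s) / D ^ d := by
  have h1 : (k / w) ^ ((d : ℝ) + 2 * s) = k ^ d / w ^ d * (k ^ s * (k / w ^ 2) ^ s) := by
    rw [Real.rpow_add (by positivity), Real.rpow_natCast, div_pow, Real.rpow_mul (by positivity),
      Real.rpow_two, ← Real.mul_rpow hk.le (by positivity)]
    congr 2
    ring
  have h2 := (Real.rpow_pos_of_pos hk s).ne'
  have h3 := (Real.rpow_pos_of_pos (show 0 < k / w ^ 2 by positivity) s).ne'
  rw [h1, Real.rpow_neg hk.le, div_pow]
  field_simp
  ring

end Conjugation

theorem exists_bound_of_continuous_of_eq_zero {E : Type*} [NormedAddCommGroup E] [ProperSpace E]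
    {u : E → ℝ} {r : ℝ} (hu : Continuous u) (h₀ : ∀ z ∉ ball (0 : E) r, u z = 0) :
    ∃ M, ∀ x, |u x| ≤ M :=
  hu.bounded_above_of_compact_support (HasCompactSupport.intro (isCompact_closedBall 0 r)
    fun z hz => h₀ z fun h => hz (ball_subset_closedBall h))

section KernelIntegrals

variable {E : Type*} [NormedAddCommGroup E] [InnerProductSpace ℝ E] [FiniteDimensional ℝ E]
  [MeasurableSpace E] [BorelSpace E] [Nontrivial E] (μ : Measure E) [μ.IsAddHaarMeasure] {s : ℝ}
  {b x e : E}

theorem integral_eq_integral_inversion (hx : ‖x‖ ≠ 1) (g : E → ℝ) :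
    ∫ y, g y ∂μ = ∫ w, |‖x‖ ^ 2 - 1| ^ finrank ℝ E / ‖w‖ ^ (2 * finrank ℝ E) *
      g (((‖x‖ ^ 2 - 1) / ‖w‖ ^ 2) • w) ∂μ :=
  integral_eq_integral_div_norm_sq_smul μ
    (sub_ne_zero.2 fun h => hx ((pow_eq_one_iff_of_nonneg (norm_nonneg x) two_ne_zero).1 h)) g

theorem integral_ballKernel_tail {ρ : ℝ} (hρ : 0 < ρ) (hx : ‖x‖ < 1) (hxb : x ≠ b) :
    ∫ y in {y | ρ ≤ ‖y‖}, ballKernel s b (x + y) / ‖y‖ ^ (finrank ℝ E + 2 * s) ∂μ =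
      (1 - ‖x‖ ^ 2) ^ (-s) / ‖x - b‖ ^ finrank ℝ E *
        ∫ v in closedBall x ((1 - ‖x‖ ^ 2) / ρ), exteriorKernel s (conjPoint x b) v ∂μ := by
  have hk : 0 < 1 - ‖x‖ ^ 2 := by nlinarith [norm_nonneg x]
  have habs : |‖x‖ ^ 2 - 1| = 1 - ‖x‖ ^ 2 := by rw [abs_sub_comm, abs_of_pos hk]
  rw [← integral_indicator (measurableSet_le measurable_const measurable_norm),
    ← integral_indicator measurableSet_closedBall, integral_eq_integral_inversion μ hx.ne,
    ← integral_const_mul,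
    ← integral_add_left_eq_self (fun v => _ * (closedBall x _).indicator _ v) x]
  refine integral_congr_ae ?_
  filter_upwards [compl_mem_ae_iff.2 (measure_singleton (0 : E))] with w hw
  have hw₀ : 0 < ‖w‖ := norm_pos_iff.2 hw
  simp only [indicator, mem_ofPred_eq, mem_closedBall_iff_norm, add_sub_cancel_left,
    norm_div_norm_sq_smul, habs, le_div_comm₀ hρ hw₀]
  split_ifs
  · rw [ballKernel_inversion_of_norm_lt s hx.le hxb hw, ← inversion_factor_mul hk hw₀]
    ring
  · simp only [mul_zero]

theorem integral_ballKernel_boundary (hs : 0 < s) (he : ‖e‖ = 1) :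
    ∫ z, ballKernel s e z ∂μ =
      μ.toSphere.real univ / 2 * ProbabilityTheory.beta (finrank ℝ E / 2) s := by
  have hd : 0 < (finrank ℝ E : ℝ) / 2 := by have := finrank_pos (R := ℝ) (M := E); positivity
  set F : ℝ → ℝ := fun p => max (p - 1) 0 ^ s * p ^ (-(finrank ℝ E / 2 + s)) with hF
  have hF₀ (p : ℝ) (hp : p ≤ 1) : F p = 0 := by
    simp only [hF]
    rw [max_eq_right (by linarith), Real.zero_rpow hs.ne', zero_mul]
  have hF_nonneg (p : ℝ) : 0 ≤ F p := by
    rcases le_or_gt p 1 with hp | hp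
    · exact (hF₀ p hp).ge
    · have : 0 < p := one_pos.trans hp
      positivity
  have hradial := integral_radial_kernel μ (f := F) (b := -e) (by fun_prop) hF_nonneg
    fun p hp => hF₀ p (by simpa [he] using hp)
  rw [norm_neg, he, one_pow] at hradial
  rw [integral_eq_integral_div_norm_sq_smul μ (neg_ne_zero.2 one_ne_zero),
    ← integral_Ioi_one_beta hd hs]
  convert hradial using 1
  · refine integral_congr_ae ?_
    filter_upwards [compl_mem_ae_iff.2 (measure_singleton (0 : E))] with w hw
    have hw₀ : 0 < ‖w‖ := norm_pos_iff.2 hw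
    have hpow : (‖w‖ ^ 2) ^ (-((finrank ℝ E : ℝ) / 2 + s)) =
        (1 / ‖w‖ ^ 2) ^ s / ‖w‖ ^ finrank ℝ E := by
      rw [neg_add_rev, Real.rpow_add (by positivity), Real.rpow_neg (by positivity) (y := _ / 2),
        Real.rpow_div_two_eq_sqrt _ (by positivity), Real.sqrt_sq hw₀.le, Real.rpow_natCast,
        Real.rpow_neg (by positivity), ← Real.inv_rpow (by positivity), one_div, div_eq_mul_inv]
    rw [ballKernel_neg_one_div_norm_sq_smul s he hw]
    simp only [hF, hpow, abs_neg, abs_one, one_pow, sub_neg_eq_add, smul_eq_mul]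
    rw [mul_comm 2 (finrank ℝ E), pow_mul]
    field_simp
  · congr 1
    refine setIntegral_congr_fun measurableSet_Ioi fun p hp => ?_
    have hp₁ : 0 < p - 1 := sub_pos.2 hp
    simp only [hF, max_eq_left hp₁.le, Real.rpow_sub_one hp₁.ne']
    ring

lemma integral_ballKernel_boundary_pos (hs : 0 < s) (he : ‖e‖ = 1) :
    0 < ∫ z, ballKernel s e z ∂μ := by
  have hd : 0 < (finrank ℝ E : ℝ) / 2 := by have := finrank_pos (R := ℝ) (M := E); positivity
  rw [integral_ballKernel_boundary μ hs he]
  exact mul_pos (half_pos (toSphere_real_univ_pos μ)) (ProbabilityTheory.beta_pos hd hs)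

lemma integrable_ballKernel_boundary (hs : 0 < s) (he : ‖e‖ = 1) : Integrable (ballKernel s e) μ :=
  .of_integral_ne_zero (integral_ballKernel_boundary_pos μ hs he).ne'

theorem integral_mul_ballKernel_boundary (hs : 0 < s) (he : ‖e‖ = 1) (hb : 1 < ‖b‖) :
    ∫ z, (‖b‖ ^ 2 - 1) ^ s / ‖z - b‖ ^ (finrank ℝ E + 2 * s) * ballKernel s e z ∂μ =
      (∫ z, ballKernel s e z ∂μ) / ‖e - b‖ ^ finrank ℝ E := by
  have hbe : b ≠ e := fun h => hb.ne' (h ▸ he)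
  have hk : 0 < ‖b‖ ^ 2 - 1 := by nlinarith
  have he' : ‖conjPoint b e‖ = 1 := by
    have hconj := one_sub_norm_conjPoint_sq hbe
    rw [he, one_pow, sub_self, mul_zero, zero_div, sub_eq_zero] at hconj
    exact (pow_eq_one_iff_of_nonneg (norm_nonneg _) two_ne_zero).1 hconj.symm
  rw [integral_ballKernel_boundary μ hs he, ← integral_ballKernel_boundary μ hs he',
    ← integral_add_left_eq_self _ b, integral_eq_integral_inversion μ hb.ne',
    ← integral_add_left_eq_self (ballKernel s (conjPoint b e)) b, div_eq_inv_mul,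
    ← integral_const_mul]
  refine integral_congr_ae ?_
  filter_upwards [compl_mem_ae_iff.2 (measure_singleton (0 : E))] with w hw
  have hw₀ : 0 < ‖w‖ := norm_pos_iff.2 hw
  have hfactor := inversion_factor_mul (D := ‖b - e‖) hk hw₀ s (finrank ℝ E)
  have hcancel : (‖b‖ ^ 2 - 1) ^ s * (‖b‖ ^ 2 - 1) ^ (-s) = 1 := by
    rw [← Real.rpow_add hk, add_neg_cancel, Real.rpow_zero]
  simp only [add_sub_cancel_left, norm_div_norm_sq_smul, abs_of_pos hk]
  rw [ballKernel_inversion_of_lt_norm s hb.le hbe hw, norm_sub_rev e b]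
  linear_combination (ballKernel s (conjPoint b e) (b + w) * (‖b‖ ^ 2 - 1) ^ s) * hfactor +
    ballKernel s (conjPoint b e) (b + w) / ‖b - e‖ ^ finrank ℝ E * hcancel

lemma integrableOn_div_norm_rpow_tail {ρ M : ℝ} (hs : 0 < s) (hρ : 0 < ρ) {u : E → ℝ}
    (hu : Continuous u) (hM : ∀ x, |u x| ≤ M) :
    IntegrableOn (fun y => u y / ‖y‖ ^ (finrank ℝ E + 2 * s)) {y | ρ ≤ ‖y‖} μ :=
  (integrableOn_norm_rpow_tail μ (mul_pos two_pos hs) hρ).bdd_mul hu.aestronglyMeasurable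
    (.of_forall hM)

theorem integral_sub_ballKernel_tail {ρ : ℝ} (hs : 0 < s) (hρ : 0 < ρ) (hb : 1 < ‖b‖)
    (hx : ‖x‖ < 1) :
    ∫ y in {y | ρ ≤ ‖y‖},
        (ballKernel s b x - ballKernel s b (x + y)) / ‖y‖ ^ (finrank ℝ E + 2 * s) ∂μ =
      (1 - ‖x‖ ^ 2) ^ (-s) / ‖x - b‖ ^ finrank ℝ E *
        (μ.toSphere.real univ * (((1 - ‖x‖ ^ 2) / ρ) ^ (2 * s) / (2 * s)) -
          ∫ v in closedBall x ((1 - ‖x‖ ^ 2) / ρ), exteriorKernel s (conjPoint x b) v ∂μ) := by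
  have hxb : x ≠ b := by rintro rfl; exact lt_asymm hb hx
  have hk : 0 < 1 - ‖x‖ ^ 2 := by nlinarith [norm_nonneg x]
  have hcont := continuous_ballKernel hs hb
  obtain ⟨M, hM⟩ := exists_bound_of_continuous_of_eq_zero hcont
    (r := 1) fun z hz => ballKernel_eq_zero hs b hz
  have hint := integrableOn_div_norm_rpow_tail μ (M := M) hs hρ
    (u := fun y => ballKernel s b (x + y)) (by fun_prop) fun y => hM _
  have hint₀ := integrableOn_div_norm_rpow_tail μ (M := M) hs hρ
    (u := fun _ => ballKernel s b x) continuous_const fun _ => hM x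
  have hpow : (1 - ‖x‖ ^ 2) ^ s * ρ ^ (-(2 * s)) =
      (1 - ‖x‖ ^ 2) ^ (-s) * ((1 - ‖x‖ ^ 2) / ρ) ^ (2 * s) := by
    rw [Real.div_rpow hk.le hρ.le, Real.rpow_neg hρ.le, ← div_eq_mul_inv, ← mul_div_assoc,
      ← Real.rpow_add hk]
    ring_nf
  simp only [sub_div (ballKernel s b x)]
  rw [integral_sub hint₀ hint, integral_ballKernel_tail μ hρ hx hxb]
  simp only [div_eq_mul_inv (ballKernel s b x)]
  rw [integral_const_mul, integral_norm_rpow_tail μ (mul_pos two_pos hs) hρ, ballKernel,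
    max_eq_left hk.le]
  linear_combination (μ.toSphere.real univ / ‖x - b‖ ^ finrank ℝ E / (2 * s)) * hpow

theorem tendsto_integral_sub_ballKernel_tail (hs : s ∈ Ioo 0 1) (hb : 1 < ‖b‖) (hx : ‖x‖ < 1) :
    Tendsto (fun ρ => ∫ y in {y | ρ ≤ ‖y‖},
        (ballKernel s b x - ballKernel s b (x + y)) / ‖y‖ ^ (finrank ℝ E + 2 * s) ∂μ)
      (𝓝[>] 0) (𝓝 (μ.toSphere.real univ / 2 * (Real.Gamma s * Real.Gamma (1 - s)) *
        ((‖b‖ ^ 2 - 1) ^ s / ‖x - b‖ ^ (finrank ℝ E + 2 * s)))) := by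
  have hxb : x ≠ b := by rintro rfl; exact lt_asymm hb hx
  have hd : 0 < ‖x - b‖ := norm_pos_iff.2 (sub_ne_zero.2 hxb)
  have hk : 0 < 1 - ‖x‖ ^ 2 := by nlinarith [norm_nonneg x]
  have hβ : 0 < ‖b‖ ^ 2 - 1 := by nlinarith
  have hconj := one_sub_norm_conjPoint_sq hxb
  have hconj_lt : ‖conjPoint x b‖ < 1 := by
    rw [← sq_lt_one_iff₀ (norm_nonneg _), ← sub_pos, hconj]
    positivity
  have hR : Tendsto (fun ρ : ℝ => (1 - ‖x‖ ^ 2) / ρ) (𝓝[>] 0) atTop :=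
    tendsto_inv_nhdsGT_zero.const_mul_atTop hk
  have hlim := ((tendsto_sub_integral_exteriorKernel μ hs hconj_lt hx.le).comp hR).const_mul
    ((1 - ‖x‖ ^ 2) ^ (-s) / ‖x - b‖ ^ finrank ℝ E)
  have hcancel : (1 - ‖x‖ ^ 2) ^ s * (1 - ‖x‖ ^ 2) ^ (-s) = 1 := by
    rw [← Real.rpow_add hk, add_neg_cancel, Real.rpow_zero]
  convert hlim.congr' ?_ using 2
  · rw [hconj, Real.div_rpow (by positivity) (by positivity), Real.mul_rpow hk.le hβ.le,
      Real.rpow_add hd, Real.rpow_natCast, Real.rpow_mul hd.le, Real.rpow_two]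
    linear_combination (-(μ.toSphere.real univ / 2 * (Real.Gamma s * Real.Gamma (1 - s)) *
      ((‖b‖ ^ 2 - 1) ^ s / (‖x - b‖ ^ finrank ℝ E * (‖x - b‖ ^ 2) ^ s)))) * hcancel
  · filter_upwards [self_mem_nhdsWithin] with ρ hρ
    exact (integral_sub_ballKernel_tail μ hs.1 hρ hb hx).symm

end KernelIntegrals

section FractionalLaplacian

variable {n : ℕ} {s : ℝ} {b e x : EuclideanSpace ℝ (Fin n)}

lemma fracC_pos (n : ℕ) (hs : s ∈ Ioo 0 1) : 0 < fracC n s := by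
  have hs₀ := hs.1
  have : 0 < Real.Gamma (n / 2 + s) := Real.Gamma_pos_of_pos (by positivity)
  have : 0 < Real.Gamma (1 - s) := Real.Gamma_pos_of_pos (sub_pos.2 hs.2)
  unfold fracC
  positivity

/-- The factor `4^s s Γ(n/2 + s) Γ(s) / Γ(n/2)` in the fractional Laplacian of `ballKernel`. -/
noncomputable def ballKernelLapConst (n : ℕ) (s : ℝ) : ℝ :=
  4 ^ s * s * Real.Gamma (n / 2 + s) * Real.Gamma s / Real.Gamma (n / 2)

lemma ballKernelLapConst_pos [NeZero n] (hs : 0 < s) : 0 < ballKernelLapConst n s := by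
  have hn : (0 : ℝ) < n := Nat.cast_pos.2 (NeZero.pos n)
  have := Real.Gamma_pos_of_pos (half_pos hn)
  have := Real.Gamma_pos_of_pos hs
  have : 0 < Real.Gamma (n / 2 + s) := Real.Gamma_pos_of_pos (by positivity)
  unfold ballKernelLapConst
  positivity

/-- The fractional Laplacian, inside the unit ball, of `ballKernel s b` with `1 < ‖b‖`. -/
noncomputable def ballKernelLap (s : ℝ) (b x : EuclideanSpace ℝ (Fin n)) : ℝ :=
  ballKernelLapConst n s * ((‖b‖ ^ 2 - 1) ^ s / ‖x - b‖ ^ ((n : ℝ) + 2 * s))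

lemma ballKernelLap_pos [NeZero n] (hs : 0 < s) (hb : 1 < ‖b‖) (hxb : x ≠ b) :
    0 < ballKernelLap s b x := by
  have hb₂ : 0 < ‖b‖ ^ 2 - 1 := by nlinarith
  have hd : 0 < ‖x - b‖ := norm_pos_iff.2 (sub_ne_zero.2 hxb)
  exact mul_pos (ballKernelLapConst_pos hs)
    (div_pos (Real.rpow_pos_of_pos hb₂ s) (Real.rpow_pos_of_pos hd _))

lemma continuousOn_ballKernelLap (s : ℝ) (b : EuclideanSpace ℝ (Fin n)) :
    ContinuousOn (ballKernelLap s b) {b}ᶜ := by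
  unfold ballKernelLap
  have hpow : ContinuousOn (fun x => ‖x - b‖ ^ ((n : ℝ) + 2 * s)) {b}ᶜ :=
    ContinuousOn.rpow_const (by fun_prop) fun x hx =>
      .inl (norm_ne_zero_iff.2 (sub_ne_zero.2 hx))
  exact continuousOn_const.mul (continuousOn_const.div hpow fun x hx =>
    (Real.rpow_pos_of_pos (norm_pos_iff.2 (sub_ne_zero.2 hx)) _).ne')

theorem hasFracLap_ballKernel [NeZero n] (hs : s ∈ Ioo 0 1) (hb : 1 < ‖b‖) (hx : ‖x‖ < 1) :
    HasFracLap n s (ballKernel s b) x (ballKernelLap s b x) := by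
  have hn : (0 : ℝ) < n := Nat.cast_pos.2 (NeZero.pos n)
  have := Real.Gamma_pos_of_pos (half_pos hn)
  have hΓ' := Real.Gamma_pos_of_pos (sub_pos.2 hs.2)
  have hlim := (tendsto_integral_sub_ballKernel_tail volume hs hb hx).const_mul (fracC n s)
  rw [finrank_euclideanSpace_fin] at hlim
  unfold HasFracLap
  convert hlim using 2
  rw [toSphere_real_univ_euclideanSpace, ballKernelLap, ballKernelLapConst, fracC]
  field_simp

theorem integral_ballKernelLap_mul_ballKernel [NeZero n] (hs : 0 < s) (he : ‖e‖ = 1)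
    (hb : 1 < ‖b‖) :
    ∫ z, ballKernelLap s b z * ballKernel s e z =
      s / kappaC n s / ‖e - b‖ ^ n := by
  have hn : (0 : ℝ) < n := Nat.cast_pos.2 (NeZero.pos n)
  have := Real.Gamma_pos_of_pos (half_pos hn)
  have := Real.Gamma_pos_of_pos hs
  have : 0 < Real.Gamma (n / 2 + s) := Real.Gamma_pos_of_pos (by positivity)
  have hint := integral_mul_ballKernel_boundary volume hs he hb
  rw [integral_ballKernel_boundary volume hs he, finrank_euclideanSpace_fin,
    toSphere_real_univ_euclideanSpace, ProbabilityTheory.beta] at hint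
  simp only [ballKernelLap, mul_assoc]
  rw [integral_const_mul, hint, ballKernelLapConst, kappaC]
  field_simp

end FractionalLaplacian

/-- `u` is a continuous solution of the Dirichlet problem `(-Δ)^s u = f` in the unit ball, with
`u = 0` outside. -/
structure SolvesInBall {n : ℕ} (s : ℝ) (u f : EuclideanSpace ℝ (Fin n) → ℝ) : Prop where
  continuous : Continuous u
  eq_zero : ∀ z ∉ ball 0 1, u z = 0
  hasFracLap : ∀ x ∈ ball 0 1, HasFracLap n s u x (f x)

namespace SolvesInBall

variable {n : ℕ} {s : ℝ} {u u₁ u₂ f f₁ f₂ : EuclideanSpace ℝ (Fin n) → ℝ}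

lemma integrableOn_tail [NeZero n] (hs : 0 < s) (h : SolvesInBall s u f) {ρ : ℝ} (hρ : 0 < ρ)
    (x : EuclideanSpace ℝ (Fin n)) :
    IntegrableOn (fun y => (u x - u (x + y)) / ‖y‖ ^ ((n : ℝ) + 2 * s)) {y | ρ ≤ ‖y‖} := by
  obtain ⟨M, hM⟩ := exists_bound_of_continuous_of_eq_zero h.continuous h.eq_zero
  have hcont := h.continuous
  simpa only [finrank_euclideanSpace_fin] using
    integrableOn_div_norm_rpow_tail volume (M := M + M) hs hρ (u := fun y => u x - u (x + y))
      (by fun_prop) fun y => (abs_sub _ _).trans (add_le_add (hM _) (hM _))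

theorem add [NeZero n] (hs : 0 < s) (h₁ : SolvesInBall s u₁ f₁) (h₂ : SolvesInBall s u₂ f₂) :
    SolvesInBall s (u₁ + u₂) (f₁ + f₂) where
  continuous := h₁.continuous.add h₂.continuous
  eq_zero z hz := by rw [Pi.add_apply, h₁.eq_zero z hz, h₂.eq_zero z hz, add_zero]
  hasFracLap x hx := by
    refine ((h₁.hasFracLap x hx).add (h₂.hasFracLap x hx)).congr' ?_
    filter_upwards [self_mem_nhdsWithin] with ρ hρ
    rw [← mul_add, ← integral_add (h₁.integrableOn_tail hs hρ x) (h₂.integrableOn_tail hs hρ x)]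
    simp only [Pi.add_apply, ← add_div, add_sub_add_comm]

theorem smul (c : ℝ) (h : SolvesInBall s u f) : SolvesInBall s (c • u) (c • f) where
  continuous := h.continuous.const_smul c
  eq_zero z hz := by rw [Pi.smul_apply, h.eq_zero z hz, smul_zero]
  hasFracLap x hx := by
    refine ((h.hasFracLap x hx).const_mul c).congr fun ρ => ?_
    rw [mul_left_comm, ← integral_const_mul]
    simp only [Pi.smul_apply, smul_eq_mul, ← mul_sub, mul_div_assoc]

theorem sub [NeZero n] (hs : 0 < s) (h₁ : SolvesInBall s u₁ f₁) (h₂ : SolvesInBall s u₂ f₂) :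
    SolvesInBall s (u₁ - u₂) (f₁ - f₂) := by
  simpa only [neg_one_smul, ← sub_eq_add_neg] using h₁.add hs (h₂.smul (-1))

theorem zero : SolvesInBall s (0 : EuclideanSpace ℝ (Fin n) → ℝ) 0 where
  continuous := continuous_const
  eq_zero _ _ := rfl
  hasFracLap x _ := by simp [HasFracLap]

/-- At a positive maximum of `u` the fractional Laplacian is nonnegative. -/
theorem nonpos (hs : s ∈ Ioo 0 1) (h : SolvesInBall s u f) (hf : ∀ x ∈ ball 0 1, f x < 0)
    (x : EuclideanSpace ℝ (Fin n)) : u x ≤ 0 := by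
  by_contra! hx
  have hsupp {z} (hz : 0 < u z) : z ∈ ball 0 1 := by
    by_contra hz'
    exact hz.ne' (h.eq_zero z hz')
  obtain ⟨x₀, -, hmax⟩ := (isCompact_closedBall 0 1).exists_isMaxOn
    ⟨x, ball_subset_closedBall (hsupp hx)⟩ h.continuous.continuousOn
  have hx₀ : 0 < u x₀ := hx.trans_le (hmax (ball_subset_closedBall (hsupp hx)))
  have hmax_univ (y) : u y ≤ u x₀ := by
    rcases le_or_gt (u y) 0 with hy | hy
    · exact hy.trans hx₀.le
    · exact hmax (ball_subset_closedBall (hsupp hy))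
  have hnonneg : 0 ≤ f x₀ := ge_of_tendsto (h.hasFracLap x₀ (hsupp hx₀)) <| .of_forall fun ρ =>
    mul_nonneg (fracC_pos n hs).le <| integral_nonneg fun y =>
      div_nonneg (sub_nonneg.2 (hmax_univ _)) (Real.rpow_nonneg (norm_nonneg _) _)
  exact hnonneg.not_gt (hf x₀ (hsupp hx₀))

end SolvesInBall

theorem solvesInBall_ballKernel {n : ℕ} [NeZero n] {s : ℝ} (hs : s ∈ Ioo 0 1)
    {b : EuclideanSpace ℝ (Fin n)} (hb : 1 < ‖b‖) :
    SolvesInBall s (ballKernel s b) (ballKernelLap s b) where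
  continuous := continuous_ballKernel hs.1 hb
  eq_zero _ hz := ballKernel_eq_zero hs.1 b hz
  hasFracLap _ hx := hasFracLap_ballKernel hs hb (by simpa using hx)

theorem SolvesInBall.le_mul_ballKernel {n : ℕ} [NeZero n] {s : ℝ} (hs : s ∈ Ioo 0 1)
    {u f : EuclideanSpace ℝ (Fin n) → ℝ} (h : SolvesInBall s u f)
    {b : EuclideanSpace ℝ (Fin n)} (hb : 1 < ‖b‖) {c : ℝ}
    (hf : ∀ x ∈ ball 0 1, f x < c * ballKernelLap s b x) (x : EuclideanSpace ℝ (Fin n)) :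
    u x ≤ c * ballKernel s b x :=
  sub_nonpos.1 <| (h.sub hs.1 ((solvesInBall_ballKernel hs hb).smul c)).nonpos hs
    (fun x hx => sub_neg.2 (hf x hx)) x

lemma ballKernel_le {E : Type*} [NormedAddCommGroup E] [Module ℝ E] {s : ℝ} (hs : 0 < s) {b : E}
    (hb : 1 < ‖b‖) (x : E) :
    ballKernel s b x ≤ max (1 - ‖x‖ ^ 2) 0 ^ s / (‖b‖ - 1) ^ finrank ℝ E := by
  have : 0 < ‖b‖ - 1 := sub_pos.2 hb
  by_cases hx : x ∈ ball 0 1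
  · have hx' : ‖x‖ < 1 := by simpa using hx
    have hxb : ‖b‖ - 1 ≤ ‖x - b‖ := by linarith [norm_sub_norm_le b x, norm_sub_rev b x]
    unfold ballKernel
    gcongr
  · rw [ballKernel_eq_zero hs b hx]
    positivity

theorem SolvesInBall.exists_abs_le (n : ℕ) [NeZero n] {s : ℝ} (hs : s ∈ Ioo 0 1) :
    ∃ C > 0, ∀ (u f : EuclideanSpace ℝ (Fin n) → ℝ) (η : ℝ), SolvesInBall s u f →
      (∀ x ∈ ball 0 1, |f x| < η) → ∀ x, |u x| ≤ C * η * max (1 - ‖x‖ ^ 2) 0 ^ s := by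
  obtain ⟨b, hb⟩ := NormedSpace.exists_lt_norm ℝ (EuclideanSpace ℝ (Fin n)) 1
  have hb' : 0 < ‖b‖ - 1 := sub_pos.2 hb
  have hne {x : EuclideanSpace ℝ (Fin n)} (hx : x ∈ closedBall 0 1) : x ≠ b := by
    rintro rfl
    exact hb.not_ge (by simpa using hx)
  obtain ⟨m, hm, hle⟩ := (isCompact_closedBall 0 1).exists_forall_le'
    ((continuousOn_ballKernelLap s b).mono fun _ hx => hne hx)
    fun x hx => ballKernelLap_pos hs.1 hb (hne hx)
  refine ⟨(m * (‖b‖ - 1) ^ n)⁻¹, by positivity, fun u f η hu hf x => ?_⟩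
  have hη : 0 < η := (abs_nonneg _).trans_lt (hf 0 (by simp))
  have hbarrier {y} (hy : y ∈ ball 0 1) : |f y| < η / m * ballKernelLap s b y :=
    (hf y hy).trans_le <| by
      rw [div_mul_eq_mul_div, le_div_iff₀ hm]
      exact mul_le_mul_of_nonneg_left (hle y (ball_subset_closedBall hy)) hη.le
  have hupper := hu.le_mul_ballKernel hs hb (fun y hy => (le_abs_self _).trans_lt (hbarrier hy)) x
  have hlower := (hu.smul (-1)).le_mul_ballKernel hs hb
    (fun y hy => by simpa using (neg_le_abs _).trans_lt (hbarrier hy)) x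
  calc |u x| ≤ η / m * ballKernel s b x := abs_le'.2 ⟨hupper, by simpa using hlower⟩
    _ ≤ η / m * (max (1 - ‖x‖ ^ 2) 0 ^ s / (‖b‖ - 1) ^ n) := by
        gcongr
        simpa only [finrank_euclideanSpace_fin] using ballKernel_le hs.1 hb x
    _ = _ := by field_simp

section BoundaryTrace

variable {n : ℕ} {s : ℝ} {e b : EuclideanSpace ℝ (Fin n)}
  {u u₁ u₂ f f₁ f₂ : EuclideanSpace ℝ (Fin n) → ℝ}

theorem continuousOn_mem_uniformClosureOn_ballKernelLap [NeZero n] (hs : 0 < s)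
    (hf : ContinuousOn f (closedBall 0 1)) :
    f ∈ uniformClosureOn (closedBall 0 1)
      (Submodule.span ℝ (ballKernelLap s '' {b : EuclideanSpace ℝ (Fin n) | 1 < ‖b‖})) := by
  refine continuousOn_mem_uniformClosureOn (μ := n / 2 + s) (isCompact_closedBall 0 1)
    (U := {b | 1 < ‖b‖}) (isOpen_lt continuous_const continuous_norm)
    (NormedSpace.exists_lt_norm ℝ _ 1)
    (disjoint_left.2 fun x hx hx' => (mem_closedBall_zero_iff.1 hx).not_gt hx') (by positivity)
    (by rw [finrank_euclideanSpace_fin]; linarith) (fun b hb => ?_) hf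
  have hb₂ : 0 < ‖b‖ ^ 2 - 1 := by nlinarith [mem_ofPred_eq.mp hb]
  set c := ballKernelLapConst n s * (‖b‖ ^ 2 - 1) ^ s with hc
  have hc₀ : c ≠ 0 := (mul_pos (ballKernelLapConst_pos hs) (Real.rpow_pos_of_pos hb₂ s)).ne'
  convert Submodule.smul_mem _ c⁻¹ (Submodule.subset_span (mem_image_of_mem _ hb)) using 1
  ext x
  rw [Pi.smul_apply, smul_eq_mul, ballKernelLap, ← mul_div_assoc, ← hc, inv_mul_eq_div,
    div_div_cancel_left' hc₀, Real.rpow_neg (by positivity), ← Real.rpow_two,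
    ← Real.rpow_mul (norm_nonneg _)]
  ring_nf

/-- `T` is the ratio at the boundary point `e` of `u` to the boundary profile `(1 - ‖x‖²)₊^s`. -/
def HasBoundaryTrace (s : ℝ) (u : EuclideanSpace ℝ (Fin n) → ℝ) (e : EuclideanSpace ℝ (Fin n))
    (T : ℝ) : Prop :=
  (fun x => u x - T * max (1 - ‖x‖ ^ 2) 0 ^ s) =o[𝓝 e] fun x => max (1 - ‖x‖ ^ 2) 0 ^ s

lemma HasBoundaryTrace.add {T₁ T₂ : ℝ} (h₁ : HasBoundaryTrace s u₁ e T₁)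
    (h₂ : HasBoundaryTrace s u₂ e T₂) : HasBoundaryTrace s (u₁ + u₂) e (T₁ + T₂) :=
  (Asymptotics.IsLittleO.add h₁ h₂).congr_left fun x => by rw [Pi.add_apply]; ring

lemma HasBoundaryTrace.smul {T : ℝ} (c : ℝ) (h : HasBoundaryTrace s u e T) :
    HasBoundaryTrace s (c • u) e (c * T) :=
  (h.const_mul_left c).congr_left fun x => by rw [Pi.smul_apply, smul_eq_mul]; ring

lemma hasBoundaryTrace_ballKernel (s : ℝ) (hbe : e ≠ b) :
    HasBoundaryTrace s (ballKernel s b) e (1 / ‖e - b‖ ^ n) := by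
  have hd : ‖e - b‖ ^ n ≠ 0 := pow_ne_zero _ (norm_ne_zero_iff.2 (sub_ne_zero.2 hbe))
  have hcont : ContinuousAt (fun x : EuclideanSpace ℝ (Fin n) => 1 / ‖x - b‖ ^ n) e :=
    continuousAt_const.div (by fun_prop) hd
  have hsub : Tendsto (fun x : EuclideanSpace ℝ (Fin n) => 1 / ‖x - b‖ ^ n - 1 / ‖e - b‖ ^ n)
      (𝓝 e) (𝓝 0) := tendsto_sub_nhds_zero_iff.2 hcont
  refine (((Asymptotics.isLittleO_one_iff ℝ).2 hsub).mul_isBigO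
    (Asymptotics.isBigO_refl (fun x => max (1 - ‖x‖ ^ 2) 0 ^ s) _)).congr (fun x => ?_) fun x => ?_
  · rw [ballKernel, finrank_euclideanSpace_fin]
    ring
  · rw [one_mul]

/-- The integral formula for the boundary trace at `e` of the solution of `(-Δ)^s u = f`. -/
noncomputable def boundaryTrace (s : ℝ) (e : EuclideanSpace ℝ (Fin n))
    (f : EuclideanSpace ℝ (Fin n) → ℝ) : ℝ :=
  kappaC n s / s * ∫ z, f z * ballKernel s e z

lemma kappaC_pos [NeZero n] (hs : 0 < s) : 0 < kappaC n s := by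
  have hn : (0 : ℝ) < n := Nat.cast_pos.2 (NeZero.pos n)
  have := Real.Gamma_pos_of_pos (half_pos hn)
  have := Real.Gamma_pos_of_pos hs
  unfold kappaC
  positivity

lemma integrable_mul_ballKernel_boundary [NeZero n] (hs : 0 < s) (he : ‖e‖ = 1)
    (hf : ContinuousOn f (closedBall 0 1)) : Integrable fun z => f z * ballKernel s e z := by
  rw [← integrableOn_iff_integrable_of_support_subset (s := closedBall 0 1)]
  · exact (integrable_ballKernel_boundary volume hs he).integrableOn.continuousOn_mul hf
      (isCompact_closedBall 0 1)
  · refine Function.support_subset_iff'.2 fun z hz => ?_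
    rw [ballKernel_eq_zero hs e fun h => hz (ball_subset_closedBall h), mul_zero]

lemma boundaryTrace_add [NeZero n] (hs : 0 < s) (he : ‖e‖ = 1)
    (hf₁ : ContinuousOn f₁ (closedBall 0 1)) (hf₂ : ContinuousOn f₂ (closedBall 0 1)) :
    boundaryTrace s e (f₁ + f₂) = boundaryTrace s e f₁ + boundaryTrace s e f₂ := by
  simp only [boundaryTrace, Pi.add_apply, add_mul]
  rw [integral_add (integrable_mul_ballKernel_boundary hs he hf₁)
    (integrable_mul_ballKernel_boundary hs he hf₂), mul_add]

lemma boundaryTrace_smul (s : ℝ) (e : EuclideanSpace ℝ (Fin n)) (c : ℝ)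
    (f : EuclideanSpace ℝ (Fin n) → ℝ) :
    boundaryTrace s e (c • f) = c * boundaryTrace s e f := by
  simp only [boundaryTrace, Pi.smul_apply, smul_eq_mul, mul_assoc c, integral_const_mul]
  exact mul_left_comm _ _ _

lemma boundaryTrace_ballKernelLap [NeZero n] (hs : 0 < s) (he : ‖e‖ = 1) (hb : 1 < ‖b‖) :
    boundaryTrace s e (ballKernelLap s b) = 1 / ‖e - b‖ ^ n := by
  have hκ := (kappaC_pos (n := n) hs).ne'
  rw [boundaryTrace, integral_ballKernelLap_mul_ballKernel hs he hb]
  field_simp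

lemma abs_boundaryTrace_le [NeZero n] (hs : 0 < s) (he : ‖e‖ = 1) {η : ℝ}
    (hf : ∀ x ∈ ball 0 1, |f x| ≤ η) : |boundaryTrace s e f| ≤ boundaryTrace s e 1 * η := by
  have hbound (z) : ‖f z * ballKernel s e z‖ ≤ η * ballKernel s e z := by
    by_cases hz : z ∈ ball 0 1
    · rw [norm_mul, Real.norm_eq_abs, Real.norm_of_nonneg (ballKernel_nonneg s e z)]
      exact mul_le_mul_of_nonneg_right (hf z hz) (ballKernel_nonneg s e z)
    · simp [ballKernel_eq_zero hs e hz]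
  have hint := norm_integral_le_of_norm_le
    ((integrable_ballKernel_boundary volume hs he).const_mul η) (.of_forall hbound)
  have hκ : 0 ≤ kappaC n s / s := (div_pos (kappaC_pos hs) hs).le
  rw [boundaryTrace, abs_mul, abs_of_nonneg hκ]
  calc kappaC n s / s * |∫ z, f z * ballKernel s e z|
      ≤ kappaC n s / s * ∫ z, η * ballKernel s e z := mul_le_mul_of_nonneg_left hint hκ
    _ = _ := by simp only [boundaryTrace, Pi.one_apply, one_mul, integral_const_mul]; ring

theorem exists_solvesInBall_of_mem_span [NeZero n] (hs : s ∈ Ioo 0 1) (he : ‖e‖ = 1)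
    (hf : f ∈ Submodule.span ℝ (ballKernelLap s '' {b : EuclideanSpace ℝ (Fin n) | 1 < ‖b‖})) :
    ContinuousOn f (closedBall 0 1) ∧
      ∃ u, SolvesInBall s u f ∧ HasBoundaryTrace s u e (boundaryTrace s e f) := by
  induction hf using Submodule.span_induction with
  | mem f hf =>
    obtain ⟨b, hb, rfl⟩ := hf
    have hbe : e ≠ b := fun h => (h ▸ hb : 1 < ‖e‖).ne' he
    refine ⟨(continuousOn_ballKernelLap s b).mono ?_, ballKernel s b,
      solvesInBall_ballKernel hs hb, ?_⟩
    · rintro x hx rfl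
      exact hb.not_ge (mem_closedBall_zero_iff.1 hx)
    · rw [boundaryTrace_ballKernelLap hs.1 he hb]
      exact hasBoundaryTrace_ballKernel s hbe
  | zero =>
    refine ⟨continuousOn_const, 0, .zero, ?_⟩
    simp [HasBoundaryTrace, boundaryTrace]
  | add f₁ f₂ _ _ ih₁ ih₂ =>
    obtain ⟨hf₁, u₁, hu₁, hT₁⟩ := ih₁
    obtain ⟨hf₂, u₂, hu₂, hT₂⟩ := ih₂
    exact ⟨hf₁.add hf₂, u₁ + u₂, hu₁.add hs.1 hu₂,
      boundaryTrace_add hs.1 he hf₁ hf₂ ▸ hT₁.add hT₂⟩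
  | smul c f _ ih =>
    obtain ⟨hf, u, hu, hT⟩ := ih
    exact ⟨hf.const_smul c, c • u, hu.smul c, boundaryTrace_smul s e c f ▸ hT.smul c⟩

theorem SolvesInBall.hasBoundaryTrace [NeZero n] (hs : s ∈ Ioo 0 1) (he : ‖e‖ = 1)
    (hf : ContinuousOn f (closedBall 0 1)) (hu : SolvesInBall s u f) :
    HasBoundaryTrace s u e (boundaryTrace s e f) := by
  obtain ⟨C, hC₀, hC⟩ := SolvesInBall.exists_abs_le n hs
  set K := boundaryTrace s e (1 : EuclideanSpace ℝ (Fin n) → ℝ)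
  have hK : 0 ≤ K := (abs_nonneg _).trans <| by
    simpa using abs_boundaryTrace_le hs.1 he (f := 1) (η := 1) fun x _ => by simp
  refine Asymptotics.isLittleO_iff.2 fun ε hε => ?_
  set η := ε / (2 * (2 * C + K)) with hη
  have hη₀ : 0 < η := by positivity
  obtain ⟨f₁, hf₁, hclose⟩ := continuousOn_mem_uniformClosureOn_ballKernelLap hs.1 hf η hη₀
  obtain ⟨hf₁c, u₁, hu₁, hT₁⟩ := exists_solvesInBall_of_mem_span hs he hf₁
  have hball {y} (hy : y ∈ ball 0 1) : |f y - f₁ y| ≤ η := hclose y (ball_subset_closedBall hy)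
  have htrace : |boundaryTrace s e f₁ - boundaryTrace s e f| ≤ K * η := by
    have hlinear : boundaryTrace s e f₁ - boundaryTrace s e f =
        boundaryTrace s e (f₁ + (-1 : ℝ) • f) := by
      rw [boundaryTrace_add hs.1 he hf₁c (hf.const_smul _), boundaryTrace_smul, neg_one_mul,
        sub_eq_add_neg]
    rw [hlinear, neg_one_smul, ← sub_eq_add_neg]
    exact abs_boundaryTrace_le hs.1 he fun y hy => (abs_sub_comm _ _).trans_le (hball hy)
  filter_upwards [Asymptotics.isLittleO_iff.1 hT₁ (half_pos hε)] with x hx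
  have hdiff := hC _ _ (2 * η) (hu.sub hs.1 hu₁)
    (fun y hy => (hball hy).trans_lt (by linarith)) x
  have hδ : 0 ≤ max (1 - ‖x‖ ^ 2) 0 ^ s := by positivity
  rw [Real.norm_eq_abs, Real.norm_of_nonneg hδ] at hx ⊢
  set δ := max (1 - ‖x‖ ^ 2) 0 ^ s
  calc |u x - boundaryTrace s e f * δ|
      = |(u x - u₁ x) + (u₁ x - boundaryTrace s e f₁ * δ) +
          (boundaryTrace s e f₁ - boundaryTrace s e f) * δ| := by ring_nf
    _ ≤ C * (2 * η) * δ + ε / 2 * δ + K * η * δ := by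
        refine (abs_add_three _ _ _).trans ?_
        rw [abs_mul _ δ, abs_of_nonneg hδ]
        gcongr
        exact hdiff
    _ = ε * δ := by
        rw [hη]
        field_simp
        ring

end BoundaryTrace

section BlowUp

variable {E : Type*} [NormedAddCommGroup E] [InnerProductSpace ℝ E] {s : ℝ} {e : E}

lemma rpow_neg_mul_max_one_sub_norm_sq (s : ℝ) (he : ‖e‖ = 1) (X : E) {ε : ℝ} (hε : 0 < ε) :
    ε ^ (-s) * max (1 - ‖e + ε • X‖ ^ 2) 0 ^ s = max (2 * -⟪e, X⟫ - ε * ‖X‖ ^ 2) 0 ^ s := by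
  have hfactor : 1 - ‖e + ε • X‖ ^ 2 = ε * (2 * -⟪e, X⟫ - ε * ‖X‖ ^ 2) := by
    rw [norm_add_sq_real, inner_smul_right, norm_smul, he, Real.norm_eq_abs, abs_of_pos hε]
    ring
  have hmax : max (1 - ‖e + ε • X‖ ^ 2) 0 = ε * max (2 * -⟪e, X⟫ - ε * ‖X‖ ^ 2) 0 := by
    rw [hfactor, mul_max_of_nonneg _ _ hε.le, mul_zero]
  rw [hmax, Real.mul_rpow hε.le (le_max_right _ _), ← mul_assoc, ← Real.rpow_add hε,
    neg_add_cancel, Real.rpow_zero, one_mul]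

lemma rpow_neg_mul_max_one_sub_norm_sq_le (hs : 0 ≤ s) (he : ‖e‖ = 1) (X : E) {ε : ℝ}
    (hε : 0 < ε) :
    ε ^ (-s) * max (1 - ‖e + ε • X‖ ^ 2) 0 ^ s ≤ 2 ^ s * ‖X‖ ^ s := by
  have hinner : -⟪e, X⟫ ≤ ‖X‖ := by
    simpa [he] using (neg_le_abs _).trans (abs_real_inner_le_norm e X)
  rw [rpow_neg_mul_max_one_sub_norm_sq s he X hε, ← Real.mul_rpow zero_le_two (norm_nonneg X)]
  refine Real.rpow_le_rpow (le_max_right _ _) (max_le ?_ (by positivity)) hs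
  linarith [mul_nonneg hε.le (sq_nonneg ‖X‖)]

lemma tendsto_rpow_neg_mul_max_one_sub_norm_sq (hs : 0 ≤ s) (he : ‖e‖ = 1) (X : E) :
    Tendsto (fun ε : ℝ => ε ^ (-s) * max (1 - ‖e + ε • X‖ ^ 2) 0 ^ s) (𝓝[>] 0)
      (𝓝 (2 ^ s * max (-⟪e, X⟫) 0 ^ s)) := by
  have hcont : Continuous fun ε : ℝ => max (2 * -⟪e, X⟫ - ε * ‖X‖ ^ 2) 0 ^ s :=
    Continuous.rpow_const (by fun_prop) fun _ => .inr hs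
  have hlim := hcont.continuousWithinAt (s := Ioi 0) (x := 0)
  have hval : max (2 * -⟪e, X⟫ - 0 * ‖X‖ ^ 2) 0 ^ s = 2 ^ s * max (-⟪e, X⟫) 0 ^ s := by
    rw [zero_mul, sub_zero, ← Real.mul_rpow zero_le_two (le_max_right _ _),
      mul_max_of_nonneg _ _ zero_le_two, mul_zero]
  rw [ContinuousWithinAt, hval] at hlim
  refine hlim.congr' ?_
  filter_upwards [self_mem_nhdsWithin] with ε hε
  exact (rpow_neg_mul_max_one_sub_norm_sq s he X hε).symm

end BlowUp

section Expansion

variable {n : ℕ} {s : ℝ} {e : EuclideanSpace ℝ (Fin n)} {u f g : EuclideanSpace ℝ (Fin n) → ℝ}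

theorem HasBoundaryTrace.tendsto_rpow_neg_mul {T : ℝ} (hs : 0 ≤ s) (he : ‖e‖ = 1)
    (hu : HasBoundaryTrace s u e T) (X : EuclideanSpace ℝ (Fin n)) :
    Tendsto (fun ε : ℝ => ε ^ (-s) * u (e + ε • X)) (𝓝[>] 0)
      (𝓝 (2 ^ s * T * max (-⟪e, X⟫) 0 ^ s)) := by
  have hprofile := tendsto_rpow_neg_mul_max_one_sub_norm_sq hs he X
  have hline : Tendsto (fun ε : ℝ => e + ε • X) (𝓝[>] 0) (𝓝 e) :=
    Continuous.tendsto' (by fun_prop) 0 e (by simp) |>.mono_left nhdsWithin_le_nhds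
  have hremainder : Tendsto (fun ε : ℝ => ε ^ (-s) *
      (u (e + ε • X) - T * max (1 - ‖e + ε • X‖ ^ 2) 0 ^ s)) (𝓝[>] 0) (𝓝 0) :=
    (Asymptotics.isLittleO_one_iff ℝ).1 <|
      ((Asymptotics.isBigO_refl (fun ε : ℝ => ε ^ (-s)) _).mul_isLittleO
        (hu.comp_tendsto hline)).trans_isBigO (hprofile.isBigO_one ℝ)
  convert hremainder.add (hprofile.const_mul T) using 2
  · ring
  · ring

lemma boundaryTrace_eq (hs : 0 < s) (e : EuclideanSpace ℝ (Fin n))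
    (f : EuclideanSpace ℝ (Fin n) → ℝ) :
    boundaryTrace s e f =
      kappaC n s * ∫ z in ball 0 1, f z * (1 - ‖z‖ ^ 2) ^ s / (s * ‖z - e‖ ^ n) := by
  rw [boundaryTrace, div_mul_eq_mul_div, mul_div_assoc, ← integral_div,
    ← setIntegral_eq_integral_of_forall_compl_eq_zero (s := ball 0 1)]
  · congr 1
    refine setIntegral_congr_fun measurableSet_ball fun z hz => ?_
    have hz₁ : ‖z‖ < 1 := by simpa using hz
    have hz₂ : 0 ≤ 1 - ‖z‖ ^ 2 := by nlinarith [norm_nonneg z]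
    simp only [ballKernel, max_eq_left hz₂, finrank_euclideanSpace_fin]
    rw [← mul_div_assoc, div_div, mul_comm s]
  · intro z hz
    rw [ballKernel_eq_zero hs e hz, mul_zero, zero_div]

lemma SolvesInBall.exists_rpow_neg_mul_abs_le [NeZero n] (hs : s ∈ Ioo 0 1) (he : ‖e‖ = 1)
    (hf : ContinuousOn f (closedBall 0 1)) (hu : SolvesInBall s u f) :
    ∃ K, ∀ ε > 0, ∀ X, ε ^ (-s) * |u (e + ε • X)| ≤ K * ‖X‖ ^ s := by
  obtain ⟨C, hC₀, hC⟩ := SolvesInBall.exists_abs_le n hs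
  obtain ⟨M, hM⟩ := (isCompact_closedBall 0 1).exists_bound_of_continuousOn hf
  have hu_le := hC u f (M + 1) hu fun x hx =>
    (hM x (ball_subset_closedBall hx)).trans_lt (lt_add_one M)
  have hM₀ : 0 ≤ M := (norm_nonneg _).trans (hM 0 (by simp))
  refine ⟨C * (M + 1) * 2 ^ s, fun ε hε X => ?_⟩
  calc ε ^ (-s) * |u (e + ε • X)|
      ≤ ε ^ (-s) * (C * (M + 1) * max (1 - ‖e + ε • X‖ ^ 2) 0 ^ s) :=
        mul_le_mul_of_nonneg_left (hu_le _) (by positivity)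
    _ = C * (M + 1) * (ε ^ (-s) * max (1 - ‖e + ε • X‖ ^ 2) 0 ^ s) := by ring
    _ ≤ C * (M + 1) * (2 ^ s * ‖X‖ ^ s) :=
        mul_le_mul_of_nonneg_left (rpow_neg_mul_max_one_sub_norm_sq_le hs.1.le he X hε)
          (by positivity)
    _ = C * (M + 1) * 2 ^ s * ‖X‖ ^ s := by ring

lemma aestronglyMeasurable_of_norm_rpow_mul [NeZero n]
    (hg : AEStronglyMeasurable fun X => ‖X‖ ^ s * g X) : AEStronglyMeasurable g := by
  have hpow : Measurable fun X : EuclideanSpace ℝ (Fin n) => (‖X‖ ^ s)⁻¹ := by fun_prop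
  refine (hpow.aestronglyMeasurable.mul hg).congr ?_
  filter_upwards [compl_mem_ae_iff.2 (measure_singleton 0)] with X hX
  exact inv_mul_cancel_left₀ (Real.rpow_pos_of_pos (norm_pos_iff.2 hX) s).ne' _

end Expansion

section TestFunctions

variable {n : ℕ} {g : EuclideanSpace ℝ (Fin n) → ℝ}

theorem contDiff_dirDeriv (v : EuclideanSpace ℝ (Fin n)) (hg : ContDiff ℝ (⊤ : ℕ∞) g) :
    ContDiff ℝ (⊤ : ℕ∞) (dirDeriv v g) := by
  have hfderiv : dirDeriv v g = fun p => fderiv ℝ g p v :=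
    funext fun p => (hg.differentiable (by simp) p).lineDeriv_eq_fderiv
  rw [hfderiv]
  exact (hg.fderiv_right (m := (⊤ : ℕ∞)) (by simp)).clm_apply contDiff_const

theorem hasCompactSupport_dirDeriv (v : EuclideanSpace ℝ (Fin n)) (hg : HasCompactSupport g) :
    HasCompactSupport (dirDeriv v g) := by
  refine hg.mono' fun p hp => ?_
  by_contra hpg
  have hzero : g =ᶠ[𝓝 p] fun _ => 0 := notMem_tsupport_iff_eventuallyEq.1 hpg
  exact hp (hzero.lineDeriv_eq.trans (by simp [lineDeriv]))

theorem multiDeriv_induction {P : (EuclideanSpace ℝ (Fin n) → ℝ) → Prop}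
    (hP : ∀ v g, P g → P (dirDeriv v g)) (α : Fin n → ℕ) (hg : P g) : P (multiDeriv α g) := by
  unfold multiDeriv
  induction (Finset.univ : Finset (Fin n)).toList with
  | nil => exact hg
  | cons i l ih =>
    rw [List.foldr_cons]
    exact Function.Iterate.rec P ih (fun _ => hP _ _) (α i)

theorem contDiff_multiDeriv (α : Fin n → ℕ) (hg : ContDiff ℝ (⊤ : ℕ∞) g) :
    ContDiff ℝ (⊤ : ℕ∞) (multiDeriv α g) :=
  multiDeriv_induction (P := fun g => ContDiff ℝ (⊤ : ℕ∞) g)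
    (fun v _ => contDiff_dirDeriv v) α hg

theorem hasCompactSupport_multiDeriv (α : Fin n → ℕ) (hg : HasCompactSupport g) :
    HasCompactSupport (multiDeriv α g) :=
  multiDeriv_induction (P := fun g => HasCompactSupport g)
    (fun v _ => hasCompactSupport_dirDeriv v) α hg

lemma integrable_norm_rpow_mul_multiDeriv {s : ℝ} (hs : 0 ≤ s) (α : Fin n → ℕ)
    (hg : ContDiff ℝ (⊤ : ℕ∞) g) (hgs : HasCompactSupport g) :
    Integrable fun X => ‖X‖ ^ s * multiDeriv α g X :=
  ((continuous_norm.rpow_const fun _ => .inr hs).mul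
    (contDiff_multiDeriv α hg).continuous).integrable_of_hasCompactSupport
      (hasCompactSupport_multiDeriv α hgs).mul_left

end TestFunctions

theorem eigenfunction_boundary_expansion_distributional_general {n : ℕ} {s : ℝ}
    (hs : s ∈ Ioo 0 1) {e : EuclideanSpace ℝ (Fin n)} (he : ‖e‖ = 1)
    {u f g : EuclideanSpace ℝ (Fin n) → ℝ} (hf : ContinuousOn f (closedBall 0 1))
    (hu : SolvesInBall s u f) (hg : Integrable fun X => ‖X‖ ^ s * g X) :
    Tendsto (fun ε : ℝ => ε ^ (-s) * ∫ X, u (e + ε • X) * g X) (𝓝[>] 0)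
      (𝓝 (2 ^ s * (kappaC n s *
        ∫ z in ball 0 1, f z * (1 - ‖z‖ ^ 2) ^ s / (s * ‖z - e‖ ^ n)) *
          ∫ X, max (-⟪e, X⟫) 0 ^ s * g X)) := by
  have : NeZero n := ⟨by rintro rfl; simp [Subsingleton.elim e 0] at he⟩
  have hg_meas := aestronglyMeasurable_of_norm_rpow_mul hg.aestronglyMeasurable
  have hu_cont := hu.continuous
  obtain ⟨K, hK⟩ := hu.exists_rpow_neg_mul_abs_le hs he hf
  rw [← boundaryTrace_eq hs.1]
  simp only [← integral_const_mul, ← mul_assoc]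
  refine tendsto_integral_filter_of_dominated_convergence
    (fun X => K * ‖‖X‖ ^ s * g X‖) ?_ ?_ (hg.norm.const_mul K) ?_
  · exact .of_forall fun ε =>
      (Continuous.aestronglyMeasurable (by fun_prop)).mul hg_meas
  · filter_upwards [self_mem_nhdsWithin] with ε (hε : 0 < ε)
    refine .of_forall fun X => ?_
    have hε_pow : 0 ≤ ε ^ (-s) := by positivity
    rw [norm_mul, norm_mul, norm_mul, Real.norm_of_nonneg hε_pow,
      Real.norm_of_nonneg (by positivity : 0 ≤ ‖X‖ ^ s), ← mul_assoc]
    exact mul_le_mul_of_nonneg_right (hK ε hε X) (norm_nonneg _)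
  · exact .of_forall fun X =>
      ((hu.hasBoundaryTrace hs he hf).tendsto_rpow_neg_mul hs.1.le he X).mul_const (g X)

/-- Distributional boundary expansion of the first Dirichlet eigenfunction `φ⋆` of `(-Δ)^s`
in `B₁`: for every multi-index `α` and test function `ψ`,
`lim_{ε→0⁺} ε^{-s} ∫ φ⋆(e+εX) ∂^α ψ(X) dX = κ⋆ λ⋆ ∫ (-e·X)₊^s ∂^α ψ(X) dX`. -/
theorem eigenfunction_boundary_expansion_distributional
    (n : ℕ) (hn : 1 ≤ n) (s : ℝ) (hs : s ∈ Set.Ioo (0 : ℝ) 1)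
    (e : EuclideanSpace ℝ (Fin n)) (he : ‖e‖ = 1)
    (φ : EuclideanSpace ℝ (Fin n) → ℝ) (lam : ℝ) (hlam : 0 < lam)
    (hφc : Continuous φ)
    (hφ0 : ∀ z ∉ Metric.ball (0 : EuclideanSpace ℝ (Fin n)) 1, φ z = 0)
    (hφpos : ∀ z ∈ Metric.ball (0 : EuclideanSpace ℝ (Fin n)) 1, 0 < φ z)
    (hφL2 : ∫ z in Metric.ball (0 : EuclideanSpace ℝ (Fin n)) 1, φ z ^ 2 = 1)
    (hφHolder : ∃ C : ℝ, ∀ x y : EuclideanSpace ℝ (Fin n), |φ x - φ y| ≤ C * ‖x - y‖ ^ s)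
    (hφeig : ∀ x ∈ Metric.ball (0 : EuclideanSpace ℝ (Fin n)) 1,
      HasFracLap n s φ x (lam * φ x))
    (κ : ℝ)
    (hκ : κ = 2 ^ s * kappaC n s *
      ∫ z in Metric.ball (0 : EuclideanSpace ℝ (Fin n)) 1,
        φ z * (1 - ‖z‖ ^ 2) ^ s / (s * ‖z - e‖ ^ n))
    (α : Fin n → ℕ)
    (ψ : EuclideanSpace ℝ (Fin n) → ℝ) (hψ : ContDiff ℝ (⊤ : ℕ∞) ψ) (hψc : HasCompactSupport ψ) :
    Tendsto (fun ε : ℝ =>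
        ε ^ (-s) * ∫ X : EuclideanSpace ℝ (Fin n), φ (e + ε • X) * multiDeriv α ψ X)
      (nhdsWithin 0 (Set.Ioi 0))
      (nhds (κ * lam *
        ∫ X : EuclideanSpace ℝ (Fin n), max (-⟪e, X⟫) 0 ^ s * multiDeriv α ψ X)) := by
  convert eigenfunction_boundary_expansion_distributional_general hs he
    (hφc.const_mul lam).continuousOn ⟨hφc, hφ0, hφeig⟩
    (integrable_norm_rpow_mul_multiDeriv hs.1.le α hψ hψc) using 3
  simp only [hκ, mul_assoc lam, mul_div_assoc, integral_const_mul]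
  ring
end

section
/- Let $n\geq 1$, $s\in(0,1)$, $e\in\partial B_1\subset\mathbb{R}^n$, $\omega\in\partial B_1$ and $\varepsilon_o>0$ be such that $e+\varepsilon\omega\in B_1$ for all $\varepsilon\in(0,\varepsilon_o]$. Let $\alpha\in(0,1)$ and let $f\in C^\alpha(\mathbb{R}^n)$ with $f=0$ outside $B_1$. Then $\lim_{\varepsilon\searrow0}\varepsilon^{-s}\int_{B_1}f(z)\,G(e+\varepsilon\omega,z)\,dz=\int_{B_1}f(z)\,\frac{(-2\,e\cdot\omega)^s\,(1-|z|^2)^s}{s\,|z-e|^n}\,dz$. -/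
open MeasureTheory Filter Metric Set intervalIntegral
open scoped RealInnerProductSpace

/-- `r₀(x,z) = (1-|x|²)(1-|z|²)/|z-x|²`. -/
noncomputable def rZero {n : ℕ} (x z : EuclideanSpace ℝ (Fin n)) : ℝ :=
  (1 - ‖x‖ ^ 2) * (1 - ‖z‖ ^ 2) / ‖z - x‖ ^ 2

/-- The fractional Green-type function
`G(x,z) = |z-x|^{2s-n} ∫₀^{r₀(x,z)} t^{s-1} (t+1)^{-n/2} dt`. -/
noncomputable def fracGreen (n : ℕ) (s : ℝ) (x z : EuclideanSpace ℝ (Fin n)) : ℝ :=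
  ‖z - x‖ ^ (2 * s - n) * ∫ t in (0 : ℝ)..(rZero x z), t ^ (s - 1) / (t + 1) ^ ((n : ℝ) / 2)

/-!
Write `δ(x) = 1 - |x|²`. As `x → e` inside the ball, `r₀(x,z) → 0` for every fixed `z ∈ B₁`, and
`∫₀ʳ t^(s-1) (t+1)^(-n/2) dt ~ r^s / s` gives `δ(x)^(-s) G(x,z) → δ(z)^s / (s |z-e|^n)`.

To integrate this limit one needs a majorant that survives the singularity at `z = x`. Since
`δ(z) ≤ δ(x) + 2 |z-x|`, one has `r₀(x,z) ≤ u (u + 2)` with `u = δ(x) / |z-x|`, and for `s ≤ n` the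
integral defining `G` is then at most a constant times `u^s`. Hence
`δ(x)^(-s) G(x,z) ≤ C |z-x|^(s-n)` uniformly in `x` and `z`; larger `s` are compared with `n`.
The majorants are translates of a single integrable function, so their integrals agree, and Pratt's
generalized dominated convergence theorem applies, however `x` tends to `e` within the ball.

Along the ray `x = e + ε ω` one has `δ(x) = ε (-2 e·ω - ε |ω|²)`, which produces the factor
`(-2 e·ω)^s`.
-/

theorem tendsto_integral_zero_of_nonneg_of_le_of_tendsto_integral {α ι : Type*}
    [MeasurableSpace α] {μ : Measure α} {l : Filter ι} [l.IsCountablyGenerated] {h G : ι → α → ℝ}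
    {g : α → ℝ} (hh : ∀ i, Integrable (h i) μ) (hG : ∀ i, Integrable (G i) μ)
    (hg : Integrable g μ) (h_nonneg : ∀ i a, 0 ≤ h i a) (hhG : ∀ i, ∀ᵐ a ∂μ, h i a ≤ G i a)
    (hh_lim : ∀ᵐ a ∂μ, Tendsto (h · a) l (nhds 0))
    (hG_lim : ∀ᵐ a ∂μ, Tendsto (G · a) l (nhds (g a)))
    (hint : Tendsto (fun i => ∫ a, G i a ∂μ) l (nhds (∫ a, g a ∂μ))) :
    Tendsto (fun i => ∫ a, h i a ∂μ) l (nhds 0) := by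
  -- `G i - h i` is nonnegative, so cutting it off at `g` gives it the fixed majorant `|g|`.
  set u : ι → α → ℝ := fun i a => min (G i a - h i a) (g a)
  have hu_int : ∀ i, Integrable (u i) μ := fun i => ((hG i).sub (hh i)).inf hg
  have hu_lim : Tendsto (fun i => ∫ a, u i a ∂μ) l (nhds (∫ a, g a ∂μ)) := by
    refine tendsto_integral_filter_of_dominated_convergence (fun a => |g a|)
      (.of_forall fun i => (hu_int i).aestronglyMeasurable) (.of_forall fun i => ?_) hg.abs ?_
    · filter_upwards [hhG i] with a hhGa
      have hlower : -|g a| ≤ u i a :=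
        le_min ((neg_nonpos.2 (abs_nonneg _)).trans (sub_nonneg.2 hhGa)) (neg_abs_le _)
      exact abs_le.2 ⟨hlower, (min_le_right _ _).trans (le_abs_self _)⟩
    · filter_upwards [hh_lim, hG_lim] with a hha hGa
      simpa [u] using (hGa.sub hha).min (tendsto_const_nhds (x := g a))
  refine squeeze_zero (fun i => integral_nonneg (h_nonneg i)) (fun i => ?_)
    (sub_self (∫ a, g a ∂μ) ▸ hint.sub hu_lim)
  rw [← integral_sub (hG i) (hu_int i)]
  refine integral_mono (hh i) ((hG i).sub (hu_int i)) fun a => ?_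
  linarith [min_le_left (G i a - h i a) (g a)]

theorem tendsto_integral_of_norm_le_of_tendsto_integral {α E : Type*} [MeasurableSpace α]
    {μ : Measure α} [NormedAddCommGroup E] [NormedSpace ℝ E] {F : ℕ → α → E} {f : α → E}
    {G : ℕ → α → ℝ} {g : α → ℝ} (hF : ∀ k, AEStronglyMeasurable (F k) μ)
    (hG : ∀ k, Integrable (G k) μ) (hg : Integrable g μ) (hFG : ∀ k, ∀ᵐ a ∂μ, ‖F k a‖ ≤ G k a)
    (hFf : ∀ᵐ a ∂μ, Tendsto (F · a) atTop (nhds (f a)))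
    (hGg : ∀ᵐ a ∂μ, Tendsto (G · a) atTop (nhds (g a)))
    (hint : Tendsto (fun k => ∫ a, G k a ∂μ) atTop (nhds (∫ a, g a ∂μ))) :
    Tendsto (fun k => ∫ a, F k a ∂μ) atTop (nhds (∫ a, f a ∂μ)) := by
  have hfg : ∀ᵐ a ∂μ, ‖f a‖ ≤ g a := by
    filter_upwards [ae_all_iff.2 hFG, hFf, hGg] with a hFGa hFfa hGga
    exact le_of_tendsto_of_tendsto' hFfa.norm hGga hFGa
  have hf_int : Integrable f μ := hg.mono' (aestronglyMeasurable_of_tendsto_ae atTop hF hFf) hfg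
  have hF_int : ∀ k, Integrable (F k) μ := fun k => (hG k).mono' (hF k) (hFG k)
  have hL1 : Tendsto (fun k => ∫ a, ‖F k a - f a‖ ∂μ) atTop (nhds 0) := by
    refine tendsto_integral_zero_of_nonneg_of_le_of_tendsto_integral
      (fun k => ((hF_int k).sub hf_int).norm) (fun k => (hG k).add hg) (hg.add hg)
      (fun _ _ => norm_nonneg _) (fun k => ?_) ?_ ?_ ?_
    · filter_upwards [hFG k, hfg] with a hFGa hfga
      exact (norm_sub_le _ _).trans (add_le_add hFGa hfga)
    · filter_upwards [hFf] with a hFfa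
      exact tendsto_iff_norm_sub_tendsto_zero.1 hFfa
    · filter_upwards [hGg] with a hGga using hGga.add_const (g a)
    · simpa only [integral_add' (hG _) hg, integral_add' hg hg] using hint.add_const (∫ a, g a ∂μ)
  refine tendsto_iff_norm_sub_tendsto_zero.2 (squeeze_zero (fun _ => norm_nonneg _)
    (fun k => ?_) hL1)
  rw [← integral_sub (hF_int k) hf_int]
  exact norm_integral_le_integral_norm _

theorem tendsto_integral_of_norm_le_comp_sub {V E : Type*} [AddGroup V] [TopologicalSpace V]
    [IsTopologicalAddGroup V] [MeasurableSpace V] [MeasurableAdd V] {μ : Measure V}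
    [μ.IsAddRightInvariant] [NormedAddCommGroup E] [NormedSpace ℝ E] {l : Filter V}
    [l.IsCountablyGenerated] {e : V} (hl : l ≤ nhds e) {F : V → V → E} {f : V → E} {g : V → ℝ}
    (hF : ∀ᶠ x in l, AEStronglyMeasurable (F x) μ) (hg : Integrable g μ)
    (hg_cont : ∀ᵐ y ∂μ, ContinuousAt g y) (hFg : ∀ᶠ x in l, ∀ z, ‖F x z‖ ≤ g (z - x))
    (hFf : ∀ᵐ z ∂μ, Tendsto (F · z) l (nhds (f z))) :
    Tendsto (fun x => ∫ z, F x z ∂μ) l (nhds (∫ z, f z ∂μ)) := by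
  refine tendsto_of_seq_tendsto fun x hx => ?_
  obtain ⟨N, hN⟩ := eventually_atTop.1 (hx.eventually (hF.and hFg))
  rw [← tendsto_add_atTop_iff_nat N]
  have hxN : Tendsto (fun k => x (k + N)) atTop l := (tendsto_add_atTop_iff_nat N).2 hx
  refine tendsto_integral_of_norm_le_of_tendsto_integral (G := fun k z => g (z - x (k + N)))
    (g := fun z => g (z - e)) (fun k => (hN _ (Nat.le_add_left N k)).1)
    (fun k => hg.comp_sub_right _) (hg.comp_sub_right e)
    (fun k => .of_forall (hN _ (Nat.le_add_left N k)).2) ?_ ?_ ?_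
  · filter_upwards [hFf] with z hz using hz.comp hxN
  · filter_upwards [(measurePreserving_sub_right μ e).quasiMeasurePreserving.ae hg_cont] with z hz
    exact hz.tendsto.comp (tendsto_const_nhds.sub (hxN.mono_right hl))
  · simp_rw [integral_sub_right_eq_self g]
    exact tendsto_const_nhds

section RieszKernel

variable {E : Type*} [NormedAddCommGroup E] [NormedSpace ℝ E] [FiniteDimensional ℝ E]
  [Nontrivial E] [MeasurableSpace E] [BorelSpace E] (μ : Measure E) [μ.IsAddHaarMeasure]

theorem integrable_indicator_ball_norm_rpow {p : ℝ} (hp : -Module.finrank ℝ E < p) (R : ℝ) :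
    Integrable ((ball (0 : E) R).indicator fun y => ‖y‖ ^ p) μ := by
  rw [integrable_indicator_iff measurableSet_ball]
  refine integrableOn_ball_of_norm_le_rpow (C := 1) (α := -p) Module.finrank_pos (by linarith)
    (.of_forall fun y => ?_) (Measurable.aestronglyMeasurable (by fun_prop))
  rw [neg_neg, one_mul, Real.norm_of_nonneg (by positivity)]

theorem ae_continuousAt_indicator_ball_norm_rpow (p R : ℝ) :
    ∀ᵐ y ∂μ, ContinuousAt ((ball (0 : E) R).indicator fun y => ‖y‖ ^ p) y := by
  filter_upwards [μ.ae_ne 0, measure_eq_zero_iff_ae_notMem.1 (Measure.addHaar_sphere μ (0 : E) R)]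
    with y hy0 hyR
  rw [mem_sphere_zero_iff_norm] at hyR
  rcases lt_or_gt_of_ne hyR with hlt | hgt
  · have hcont : ContinuousAt (fun y : E => ‖y‖ ^ p) y :=
      continuous_norm.continuousAt.rpow_const (Or.inl (norm_ne_zero_iff.2 hy0))
    refine hcont.congr ?_
    filter_upwards [isOpen_ball.mem_nhds (mem_ball_zero_iff.2 hlt)] with w hw
    rw [indicator_of_mem hw]
  · refine (continuousAt_const (y := (0 : ℝ))).congr ?_
    filter_upwards [continuous_norm.continuousAt.eventually (lt_mem_nhds hgt)] with w hw
    rw [indicator_of_notMem (by simpa using hw.le)]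

end RieszKernel

/-- The radial profile `∫₀ʳ t^(s-1) / (t+1)^a dt` of the Green function: for `a = n / 2`, the
factor `‖z - x‖ ^ (2 * s - n)` of `fracGreen n s x z` multiplies its value at `r = rZero x z`. -/
noncomputable def greenProfile (s a r : ℝ) : ℝ :=
  ∫ t in (0 : ℝ)..r, t ^ (s - 1) / (t + 1) ^ a

section GreenProfile

variable {s a r : ℝ}

theorem intervalIntegrable_greenProfile (hs : 0 < s) (ha : 0 ≤ a) (hr : 0 ≤ r) :
    IntervalIntegrable (fun t : ℝ => t ^ (s - 1) / (t + 1) ^ a) volume 0 r := by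
  refine (intervalIntegrable_rpow' (r := s - 1) (by linarith)).mono_fun
    (Measurable.aestronglyMeasurable (by fun_prop)) ?_
  rw [uIoc_of_le hr]
  filter_upwards [ae_restrict_mem measurableSet_Ioc] with t ht
  have hden : (1 : ℝ) ≤ (t + 1) ^ a := Real.one_le_rpow (by linarith [ht.1]) ha
  rw [norm_div, Real.norm_of_nonneg (zero_le_one.trans hden)]
  exact div_le_self (norm_nonneg _) hden

theorem integral_zero_rpow_sub_one (hs : 0 < s) (r : ℝ) :
    ∫ t in (0 : ℝ)..r, t ^ (s - 1) = r ^ s / s := by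
  rw [integral_rpow (Or.inl (by linarith)), sub_add_cancel, Real.zero_rpow hs.ne', sub_zero]

theorem greenProfile_nonneg (hr : 0 ≤ r) : 0 ≤ greenProfile s a r :=
  integral_nonneg hr fun t ht => by
    have := ht.1
    positivity

theorem greenProfile_monotoneOn (hs : 0 < s) (ha : 0 ≤ a) :
    MonotoneOn (greenProfile s a) (Ici 0) := fun r₁ hr₁ r₂ hr₂ h => by
  refine integral_mono_interval le_rfl hr₁ h ?_ (intervalIntegrable_greenProfile hs ha hr₂)
  filter_upwards [ae_restrict_mem measurableSet_Ioc] with t ht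
  have := ht.1
  simp only [Pi.zero_apply]
  positivity

theorem greenProfile_le_rpow_div {b : ℝ} (hb : 0 < b) (hbs : b ≤ s) (hsa : s - b ≤ a)
    (hr : 0 ≤ r) : greenProfile s a r ≤ r ^ b / b := by
  rw [← integral_zero_rpow_sub_one hb]
  refine integral_mono_on_of_le_Ioo hr
    (intervalIntegrable_greenProfile (by linarith) (by linarith) hr)
    (intervalIntegrable_rpow' (by linarith)) fun t ⟨ht, _⟩ => ?_
  rw [div_le_iff₀ (by positivity)]
  calc t ^ (s - 1) = t ^ (b - 1) * t ^ (s - b) := by rw [← Real.rpow_add ht]; congr 1; ring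
    _ ≤ t ^ (b - 1) * (t + 1) ^ (s - b) := by gcongr; linarith
    _ ≤ t ^ (b - 1) * (t + 1) ^ a := by gcongr; linarith

theorem rpow_div_le_greenProfile (hs : 0 < s) (ha : 0 ≤ a) (hr : 0 ≤ r) :
    r ^ s / s / (r + 1) ^ a ≤ greenProfile s a r := by
  rw [← integral_zero_rpow_sub_one hs, ← intervalIntegral.integral_div]
  refine integral_mono_on_of_le_Ioo hr ((intervalIntegrable_rpow' (by linarith)).div_const _)
    (intervalIntegrable_greenProfile hs ha hr) fun t ⟨ht, htr⟩ => ?_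
  gcongr

theorem greenProfile_le_rpow_mul_greenProfile {q : ℝ} (hq : 0 < q) (hqs : q ≤ s) (ha : 0 ≤ a)
    (hr : 0 ≤ r) : greenProfile s a r ≤ r ^ (s - q) * greenProfile q a r := by
  rw [greenProfile, greenProfile, ← intervalIntegral.integral_const_mul]
  refine integral_mono_on_of_le_Ioo hr (intervalIntegrable_greenProfile (by linarith) ha hr)
    ((intervalIntegrable_greenProfile hq ha hr).const_mul _) fun t ⟨ht, htr⟩ => ?_
  rw [← mul_div_assoc]
  gcongr
  calc t ^ (s - 1) = t ^ (s - q) * t ^ (q - 1) := by rw [← Real.rpow_add ht]; congr 1; ring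
    _ ≤ r ^ (s - q) * t ^ (q - 1) := by gcongr

theorem tendsto_greenProfile_div_rpow (hs : 0 < s) (ha : 0 ≤ a) :
    Tendsto (fun r => greenProfile s a r / r ^ s) (nhdsWithin 0 (Ioi 0)) (nhds (1 / s)) := by
  have hlower : Tendsto (fun r : ℝ => 1 / s / (r + 1) ^ a) (nhdsWithin 0 (Ioi 0))
      (nhds (1 / s)) := by
    have hbase : Tendsto (fun r : ℝ => r + 1) (nhdsWithin 0 (Ioi 0)) (nhds 1) := by
      simpa using (tendsto_id.add_const (1 : ℝ)).mono_left (nhdsWithin_le_nhds (a := (0 : ℝ)))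
    have hden : Tendsto (fun r : ℝ => (r + 1) ^ a) (nhdsWithin 0 (Ioi 0)) (nhds 1) := by
      simpa using hbase.rpow_const (p := a) (Or.inl one_ne_zero)
    have hdiv := (tendsto_const_nhds (x := 1 / s)).div hden one_ne_zero
    rwa [div_one] at hdiv
  refine tendsto_of_tendsto_of_tendsto_of_le_of_le' hlower tendsto_const_nhds ?_ ?_ <;>
    filter_upwards [self_mem_nhdsWithin] with r (hr : 0 < r)
  · rw [le_div_iff₀ (by positivity)]
    refine (rpow_div_le_greenProfile hs ha hr.le).trans_eq' ?_
    ring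
  · rw [div_le_iff₀ (by positivity), one_div_mul_eq_div]
    exact greenProfile_le_rpow_div hs le_rfl (by simpa using ha) hr.le

theorem greenProfile_le_const_mul_rpow {u : ℝ} (hs : 0 < s) (hsa : s / 2 ≤ a) (hu : 0 ≤ u)
    (hr : 0 ≤ r) (hru : r ≤ u * (u + 2)) : greenProfile s a r ≤ 2 * 3 ^ s / s * u ^ s := by
  rcases le_total u 1 with hu1 | hu1
  · calc greenProfile s a r ≤ r ^ s / s :=
          greenProfile_le_rpow_div hs le_rfl (by linarith) hr
      _ ≤ (3 * u) ^ s / s := by gcongr; nlinarith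
      _ = 1 * 3 ^ s / s * u ^ s := by rw [Real.mul_rpow (by norm_num) hu]; ring
      _ ≤ 2 * 3 ^ s / s * u ^ s := by gcongr; norm_num
  · -- For large `u` the bound on `r` is of order `u ^ 2`, so the exponent has to be halved.
    calc greenProfile s a r ≤ r ^ (s / 2) / (s / 2) :=
          greenProfile_le_rpow_div (half_pos hs) (by linarith) (by linarith) hr
      _ ≤ (3 * u ^ 2) ^ (s / 2) / (s / 2) := by gcongr; nlinarith
      _ = 2 * 3 ^ (s / 2) / s * u ^ s := by
          rw [Real.mul_rpow (by norm_num) (by positivity), ← Real.rpow_natCast_mul hu]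
          push_cast
          rw [mul_div_cancel₀ s two_ne_zero]
          field_simp
      _ ≤ 2 * 3 ^ s / s * u ^ s := by gcongr <;> linarith

end GreenProfile

section UnitBall

variable {E : Type*} [SeminormedAddCommGroup E]

theorem one_sub_norm_sq_pos {x : E} (hx : x ∈ ball 0 1) : 0 < 1 - ‖x‖ ^ 2 := by
  rw [mem_ball_zero_iff] at hx
  nlinarith [norm_nonneg x]

theorem one_sub_norm_sq_le_add {x z : E} (hx : x ∈ ball 0 1) (hz : z ∈ ball 0 1) :
    1 - ‖z‖ ^ 2 ≤ 1 - ‖x‖ ^ 2 + 2 * ‖z - x‖ := by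
  rw [mem_ball_zero_iff] at hx hz
  have h := norm_sub_norm_le x z
  rw [norm_sub_rev] at h
  nlinarith [norm_nonneg x, norm_nonneg z, norm_nonneg (z - x)]

theorem ne_of_mem_ball_of_norm_eq_one {e z : E} (he : ‖e‖ = 1) (hz : z ∈ ball 0 1) : z ≠ e := by
  rintro rfl
  simp [he] at hz

end UnitBall

section FracGreen

variable {n : ℕ} {s : ℝ} {e x z : EuclideanSpace ℝ (Fin n)}

theorem fracGreen_eq_mul_greenProfile (n : ℕ) (s : ℝ) (x z : EuclideanSpace ℝ (Fin n)) :
    fracGreen n s x z = ‖z - x‖ ^ (2 * s - n) * greenProfile s (n / 2) (rZero x z) :=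
  rfl

theorem rZero_nonneg (hx : x ∈ ball 0 1) (hz : z ∈ ball 0 1) : 0 ≤ rZero x z :=
  div_nonneg (mul_nonneg (one_sub_norm_sq_pos hx).le (one_sub_norm_sq_pos hz).le) (sq_nonneg _)

theorem fracGreen_self (n : ℕ) (s : ℝ) (x : EuclideanSpace ℝ (Fin n)) : fracGreen n s x x = 0 := by
  simp [fracGreen, rZero]

theorem fracGreen_nonneg (hx : x ∈ ball 0 1) (hz : z ∈ ball 0 1) : 0 ≤ fracGreen n s x z :=
  mul_nonneg (by positivity) (greenProfile_nonneg (rZero_nonneg hx hz))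

theorem norm_sub_rpow_mul_rZero_rpow (hx : x ∈ ball 0 1) (hz : z ∈ ball 0 1) (hzx : z ≠ x)
    (p b : ℝ) : ‖z - x‖ ^ p * rZero x z ^ b =
      (1 - ‖x‖ ^ 2) ^ b * (1 - ‖z‖ ^ 2) ^ b * ‖z - x‖ ^ (p - 2 * b) := by
  have hd : 0 < ‖z - x‖ := norm_sub_pos_iff.2 hzx
  have hx' := (one_sub_norm_sq_pos hx).le
  have hz' := (one_sub_norm_sq_pos hz).le
  rw [rZero, Real.div_rpow (by positivity) (by positivity), Real.mul_rpow hx' hz',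
    Real.rpow_sub hd, Real.rpow_mul hd.le, Real.rpow_two]
  ring

theorem fracGreen_le_rpow_mul_fracGreen {q : ℝ} (hq : 0 < q) (hqs : q ≤ s) (hx : x ∈ ball 0 1)
    (hz : z ∈ ball 0 1) : fracGreen n s x z ≤
      (1 - ‖x‖ ^ 2) ^ (s - q) * (1 - ‖z‖ ^ 2) ^ (s - q) * fracGreen n q x z := by
  rcases eq_or_ne z x with rfl | hzx
  · simp only [fracGreen_self, mul_zero, le_refl]
  · have hpow := norm_sub_rpow_mul_rZero_rpow hx hz hzx (2 * s - n) (s - q)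
    rw [show 2 * s - n - 2 * (s - q) = 2 * q - n by ring] at hpow
    rw [fracGreen_eq_mul_greenProfile, fracGreen_eq_mul_greenProfile, ← mul_assoc, ← hpow,
      mul_assoc]
    gcongr
    exact greenProfile_le_rpow_mul_greenProfile hq hqs (by positivity) (rZero_nonneg hx hz)

theorem rZero_le_div_mul_div_add_two (hx : x ∈ ball 0 1) (hz : z ∈ ball 0 1) (hzx : z ≠ x) :
    rZero x z ≤ (1 - ‖x‖ ^ 2) / ‖z - x‖ * ((1 - ‖x‖ ^ 2) / ‖z - x‖ + 2) := by
  have hd : 0 < ‖z - x‖ := norm_sub_pos_iff.2 hzx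
  have hx' := one_sub_norm_sq_pos hx
  calc rZero x z = (1 - ‖x‖ ^ 2) / ‖z - x‖ * ((1 - ‖z‖ ^ 2) / ‖z - x‖) := by
        rw [rZero, div_mul_div_comm, sq ‖z - x‖]
    _ ≤ (1 - ‖x‖ ^ 2) / ‖z - x‖ * ((1 - ‖x‖ ^ 2 + 2 * ‖z - x‖) / ‖z - x‖) := by
        gcongr
        exact one_sub_norm_sq_le_add hx hz
    _ = (1 - ‖x‖ ^ 2) / ‖z - x‖ * ((1 - ‖x‖ ^ 2) / ‖z - x‖ + 2) := by field_simp

theorem fracGreen_le_of_le_dim (hs : 0 < s) (hsn : s ≤ n) (hx : x ∈ ball 0 1)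
    (hz : z ∈ ball 0 1) : fracGreen n s x z ≤
      2 * 3 ^ s / s * (1 - ‖x‖ ^ 2) ^ s * ‖z - x‖ ^ (s - n) := by
  have hx' := one_sub_norm_sq_pos hx
  rcases eq_or_ne z x with rfl | hzx
  · rw [fracGreen_self]
    positivity
  · have hd : 0 < ‖z - x‖ := norm_sub_pos_iff.2 hzx
    calc fracGreen n s x z
        = ‖z - x‖ ^ (2 * s - n) * greenProfile s (n / 2) (rZero x z) := rfl
      _ ≤ ‖z - x‖ ^ (2 * s - n) * (2 * 3 ^ s / s * ((1 - ‖x‖ ^ 2) / ‖z - x‖) ^ s) := by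
          gcongr
          exact greenProfile_le_const_mul_rpow hs (by gcongr) (by positivity)
            (rZero_nonneg hx hz) (rZero_le_div_mul_div_add_two hx hz hzx)
      _ = 2 * 3 ^ s / s * (1 - ‖x‖ ^ 2) ^ s * (‖z - x‖ ^ (2 * s - n) / ‖z - x‖ ^ s) := by
          rw [Real.div_rpow hx'.le hd.le]
          ring
      _ = 2 * 3 ^ s / s * (1 - ‖x‖ ^ 2) ^ s * ‖z - x‖ ^ (s - n) := by
          rw [← Real.rpow_sub hd]
          congr 2
          ring

theorem rpow_neg_mul_fracGreen_le {q : ℝ} (hq : 0 < q) (hqs : q ≤ s) (hqn : q ≤ n)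
    (hx : x ∈ ball 0 1) (hz : z ∈ ball 0 1) :
    (1 - ‖x‖ ^ 2) ^ (-s) * fracGreen n s x z ≤ 2 * 3 ^ q / q * ‖z - x‖ ^ (q - n) := by
  have hx' := one_sub_norm_sq_pos hx
  have hz' := one_sub_norm_sq_pos hz
  calc (1 - ‖x‖ ^ 2) ^ (-s) * fracGreen n s x z
      ≤ (1 - ‖x‖ ^ 2) ^ (-s) * ((1 - ‖x‖ ^ 2) ^ (s - q) * 1 *
          (2 * 3 ^ q / q * (1 - ‖x‖ ^ 2) ^ q * ‖z - x‖ ^ (q - n))) := by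
        refine mul_le_mul_of_nonneg_left ?_ (by positivity)
        refine (fracGreen_le_rpow_mul_fracGreen hq hqs hx hz).trans ?_
        have hz_le : (1 - ‖z‖ ^ 2) ^ (s - q) ≤ 1 :=
          Real.rpow_le_one hz'.le (by linarith [sq_nonneg ‖z‖]) (by linarith)
        have hG := fracGreen_le_of_le_dim hq hqn hx hz
        have hG_nonneg : 0 ≤ fracGreen n q x z := fracGreen_nonneg hx hz
        gcongr
    _ = ((1 - ‖x‖ ^ 2) ^ (-s) * (1 - ‖x‖ ^ 2) ^ (s - q) * (1 - ‖x‖ ^ 2) ^ q) *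
          (2 * 3 ^ q / q * ‖z - x‖ ^ (q - n)) := by ring
    _ = 2 * 3 ^ q / q * ‖z - x‖ ^ (q - n) := by
        rw [← Real.rpow_add hx', ← Real.rpow_add hx', show -s + (s - q) + q = 0 by ring,
          Real.rpow_zero, one_mul]

theorem rpow_neg_mul_fracGreen_eq (hx : x ∈ ball 0 1) (hz : z ∈ ball 0 1) (hzx : z ≠ x) :
    (1 - ‖x‖ ^ 2) ^ (-s) * fracGreen n s x z =
      (1 - ‖z‖ ^ 2) ^ s / ‖z - x‖ ^ n *
        (greenProfile s (n / 2) (rZero x z) / rZero x z ^ s) := by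
  have hd : 0 < ‖z - x‖ := norm_sub_pos_iff.2 hzx
  have hx' := one_sub_norm_sq_pos hx
  have hz' := one_sub_norm_sq_pos hz
  have hr : 0 < rZero x z := by unfold rZero; positivity
  have hpow := norm_sub_rpow_mul_rZero_rpow hx hz hzx (2 * s - n) s
  rw [sub_sub_cancel_left, Real.rpow_neg hd.le, Real.rpow_natCast] at hpow
  rw [fracGreen_eq_mul_greenProfile, Real.rpow_neg hx'.le,
    eq_div_of_mul_eq (Real.rpow_pos_of_pos hr s).ne' hpow]
  field_simp

theorem tendsto_rZero_nhdsGT_zero (he : ‖e‖ = 1) (hz : z ∈ ball 0 1) :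
    Tendsto (rZero · z) (nhdsWithin e (ball 0 1)) (nhdsWithin 0 (Ioi 0)) := by
  have hd : 0 < ‖z - e‖ := norm_sub_pos_iff.2 (ne_of_mem_ball_of_norm_eq_one he hz)
  refine tendsto_nhdsWithin_iff.2 ⟨?_, ?_⟩
  · have hcont : ContinuousAt (rZero · z) e := by
      unfold rZero
      exact ContinuousAt.div (by fun_prop) (by fun_prop) (by positivity)
    have hlim := hcont.tendsto.mono_left (nhdsWithin_le_nhds (s := ball 0 1))
    rwa [rZero, he, one_pow, sub_self, zero_mul, zero_div] at hlim
  · filter_upwards [self_mem_nhdsWithin,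
      nhdsWithin_le_nhds (isOpen_ne.mem_nhds (ne_of_mem_ball_of_norm_eq_one he hz).symm)]
      with x hx hxz
    have hdx : 0 < ‖z - x‖ := norm_sub_pos_iff.2 (Ne.symm hxz)
    exact div_pos (mul_pos (one_sub_norm_sq_pos hx) (one_sub_norm_sq_pos hz)) (by positivity)

theorem tendsto_rpow_neg_mul_fracGreen (hs : 0 < s) (he : ‖e‖ = 1) (hz : z ∈ ball 0 1) :
    Tendsto (fun x => (1 - ‖x‖ ^ 2) ^ (-s) * fracGreen n s x z) (nhdsWithin e (ball 0 1))
      (nhds ((1 - ‖z‖ ^ 2) ^ s / (s * ‖z - e‖ ^ n))) := by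
  have hze := ne_of_mem_ball_of_norm_eq_one he hz
  have hd : 0 < ‖z - e‖ := norm_sub_pos_iff.2 hze
  have hfactor : Tendsto (fun x => (1 - ‖z‖ ^ 2) ^ s / ‖z - x‖ ^ n) (nhdsWithin e (ball 0 1))
      (nhds ((1 - ‖z‖ ^ 2) ^ s / ‖z - e‖ ^ n)) :=
    (ContinuousAt.div (by fun_prop) (by fun_prop) (by positivity)).tendsto.mono_left
      nhdsWithin_le_nhds
  have hprofile := (tendsto_greenProfile_div_rpow hs (by positivity : 0 ≤ (n : ℝ) / 2)).comp
    (tendsto_rZero_nhdsGT_zero he hz)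
  have hlim := hfactor.mul hprofile
  rw [div_mul_div_comm, mul_one, mul_comm _ s] at hlim
  refine hlim.congr' ?_
  filter_upwards [self_mem_nhdsWithin, nhdsWithin_le_nhds (isOpen_ne.mem_nhds hze.symm)]
    with x hx hxz
  exact (rpow_neg_mul_fracGreen_eq hx hz (Ne.symm hxz)).symm

theorem aestronglyMeasurable_fracGreen (hs : 0 < s) (hx : x ∈ ball 0 1) :
    AEStronglyMeasurable (fracGreen n s x) (volume.restrict (ball 0 1)) := by
  have hprofile : Measurable fun r => greenProfile s (n / 2) (max r 0) :=
    Monotone.measurable fun r₁ r₂ h => greenProfile_monotoneOn hs (by positivity)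
      (le_max_right r₁ 0) (le_max_right r₂ 0) (max_le_max_right 0 h)
  have hr : Measurable (rZero x) := by
    unfold rZero
    fun_prop
  have hpow : Measurable fun z => ‖z - x‖ ^ (2 * s - n) := by fun_prop
  refine (hpow.mul (hprofile.comp hr)).aestronglyMeasurable.congr ?_
  filter_upwards [ae_restrict_mem measurableSet_ball] with z hz
  simp only [Pi.mul_apply, Function.comp_apply, max_eq_left (rZero_nonneg hx hz),
    fracGreen_eq_mul_greenProfile]

end FracGreen

section BoundaryLimit

variable {n : ℕ} {s M : ℝ} {e : EuclideanSpace ℝ (Fin n)} {f : EuclideanSpace ℝ (Fin n) → ℝ}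

theorem norm_indicator_mul_fracGreen_le {q : ℝ} (hq : 0 < q) (hqs : q ≤ s) (hqn : q ≤ n)
    {x : EuclideanSpace ℝ (Fin n)} (hx : x ∈ ball 0 1) (hM : ∀ z ∈ ball 0 1, |f z| ≤ M)
    (z : EuclideanSpace ℝ (Fin n)) :
    ‖(ball 0 1).indicator (fun z => (1 - ‖x‖ ^ 2) ^ (-s) * (f z * fracGreen n s x z)) z‖ ≤
      M * (2 * 3 ^ q / q) * (ball 0 2).indicator (fun y => ‖y‖ ^ (q - n)) (z - x) := by
  have hM0 : 0 ≤ M := (abs_nonneg _).trans (hM x hx)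
  by_cases hz : z ∈ ball 0 1
  · have hzx : z - x ∈ ball 0 2 := by
      rw [mem_ball_zero_iff] at hx hz ⊢
      linarith [norm_sub_le z x]
    have hx' := one_sub_norm_sq_pos hx
    have hG : 0 ≤ fracGreen n s x z := fracGreen_nonneg hx hz
    rw [indicator_of_mem hz, indicator_of_mem hzx, mul_left_comm, norm_mul,
      Real.norm_of_nonneg (mul_nonneg (by positivity) hG), mul_assoc]
    exact mul_le_mul (hM z hz) (rpow_neg_mul_fracGreen_le hq hqs hqn hx hz)
      (mul_nonneg (by positivity) hG) hM0
  · rw [indicator_of_notMem hz, norm_zero]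
    exact mul_nonneg (by positivity) (indicator_nonneg (fun y _ => by positivity) _)

theorem tendsto_rpow_neg_mul_integral_fracGreen (hs : 0 < s) (he : ‖e‖ = 1)
    (hf : AEStronglyMeasurable f (volume.restrict (ball 0 1)))
    (hM : ∀ z ∈ ball 0 1, |f z| ≤ M) :
    Tendsto (fun x => (1 - ‖x‖ ^ 2) ^ (-s) * ∫ z in ball 0 1, f z * fracGreen n s x z)
      (nhdsWithin e (ball 0 1))
      (nhds (∫ z in ball 0 1, f z * ((1 - ‖z‖ ^ 2) ^ s / (s * ‖z - e‖ ^ n)))) := by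
  have : Nontrivial (EuclideanSpace ℝ (Fin n)) := ⟨e, 0, norm_ne_zero_iff.1 (by simp [he])⟩
  have hdim : Module.finrank ℝ (EuclideanSpace ℝ (Fin n)) = n := finrank_euclideanSpace_fin
  have hn : (0 : ℝ) < n := by exact_mod_cast hdim ▸ Module.finrank_pos
  have hq : 0 < min s n := lt_min hs hn
  simp_rw [← MeasureTheory.integral_const_mul,
    ← MeasureTheory.integral_indicator (measurableSet_ball (x := (0 : EuclideanSpace ℝ (Fin n))))]
  refine tendsto_integral_of_norm_le_comp_sub nhdsWithin_le_nhds (g := fun y =>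
      M * (2 * 3 ^ min s n / min s n) * (ball 0 2).indicator (fun y => ‖y‖ ^ (min s n - n)) y)
    ?_ ((integrable_indicator_ball_norm_rpow volume (by rw [hdim]; linarith) 2).const_mul _)
    ?_ ?_ (.of_forall fun z => ?_)
  · filter_upwards [self_mem_nhdsWithin] with x hx
    exact (aestronglyMeasurable_indicator_iff measurableSet_ball).2
      ((hf.mul (aestronglyMeasurable_fracGreen hs hx)).const_mul _)
  · filter_upwards [ae_continuousAt_indicator_ball_norm_rpow volume (min s n - n) 2] with y hy
    exact hy.const_mul _
  · filter_upwards [self_mem_nhdsWithin] with x hx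
    exact norm_indicator_mul_fracGreen_le hq (min_le_left _ _) (min_le_right _ _) hx hM
  · by_cases hz : z ∈ ball 0 1
    · simp only [indicator_of_mem hz, mul_left_comm _ (f z)]
      exact (tendsto_rpow_neg_mul_fracGreen hs he hz).const_mul _
    · simp only [indicator_of_notMem hz, tendsto_const_nhds]

end BoundaryLimit

section Ray

variable {V : Type*} [NormedAddCommGroup V] [InnerProductSpace ℝ V] {e ω : V}

theorem one_sub_norm_add_smul_sq (he : ‖e‖ = 1) (ω : V) (ε : ℝ) :
    1 - ‖e + ε • ω‖ ^ 2 = ε * (-2 * ⟪e, ω⟫ - ε * ‖ω‖ ^ 2) := by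
  rw [norm_add_sq_real, he, norm_smul, inner_smul_right, Real.norm_eq_abs, mul_pow, sq_abs]
  ring

theorem inner_neg_of_norm_add_smul_lt (he : ‖e‖ = 1) {ε : ℝ} (hε : 0 < ε)
    (h : ‖e + ε • ω‖ < 1) : ⟪e, ω⟫ < 0 := by
  have hpos := one_sub_norm_sq_pos (mem_ball_zero_iff.2 h)
  rw [one_sub_norm_add_smul_sq he, mul_pos_iff_of_pos_left hε] at hpos
  nlinarith [mul_nonneg hε.le (sq_nonneg ‖ω‖)]

theorem tendsto_neg_two_mul_inner_sub (e ω : V) :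
    Tendsto (fun ε : ℝ => -2 * ⟪e, ω⟫ - ε * ‖ω‖ ^ 2) (nhdsWithin 0 (Ioi 0))
      (nhds (-2 * ⟪e, ω⟫)) := by
  have hcont : Continuous fun ε : ℝ => -2 * ⟪e, ω⟫ - ε * ‖ω‖ ^ 2 := by fun_prop
  simpa using (hcont.tendsto 0).mono_left nhdsWithin_le_nhds

theorem tendsto_add_smul_nhdsWithin_ball (he : ‖e‖ = 1) (hω : ⟪e, ω⟫ < 0) :
    Tendsto (fun ε : ℝ => e + ε • ω) (nhdsWithin 0 (Ioi 0)) (nhdsWithin e (ball 0 1)) := by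
  refine tendsto_nhdsWithin_iff.2 ⟨?_, ?_⟩
  · have hcont : Continuous fun ε : ℝ => e + ε • ω := by fun_prop
    simpa using (hcont.tendsto 0).mono_left nhdsWithin_le_nhds
  · filter_upwards [self_mem_nhdsWithin, (tendsto_neg_two_mul_inner_sub e ω).eventually
      (lt_mem_nhds (by linarith : 0 < -2 * ⟪e, ω⟫))] with ε (hε : 0 < ε) hpos
    have hsq := mul_pos hε hpos
    rw [← one_sub_norm_add_smul_sq he] at hsq
    rw [mem_ball_zero_iff, ← sq_lt_one_iff₀ (norm_nonneg _)]
    linarith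

end Ray

theorem continuous_of_dist_le_mul_rpow {X Y : Type*} [PseudoMetricSpace X] [PseudoMetricSpace Y]
    {f : X → Y} {C α : ℝ} (hα : 0 < α) (hf : ∀ x y, dist (f x) (f y) ≤ C * dist x y ^ α) :
    Continuous f := by
  refine continuous_iff_continuousAt.2 fun y => tendsto_iff_dist_tendsto_zero.2 ?_
  have hbound : Continuous fun x => C * dist x y ^ α :=
    ((continuous_id.dist continuous_const).rpow_const fun _ => Or.inr hα.le).const_mul C
  refine squeeze_zero (fun _ => dist_nonneg) (fun x => hf x y) ?_
  simpa [hα.ne'] using hbound.tendsto y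

theorem green_function_boundary_asymptotics_general {n : ℕ} {s : ℝ} (hs : 0 < s)
    {e ω : EuclideanSpace ℝ (Fin n)} (he : ‖e‖ = 1) (hω : ⟪e, ω⟫ < 0)
    {f : EuclideanSpace ℝ (Fin n) → ℝ} {M : ℝ}
    (hf : AEStronglyMeasurable f (volume.restrict (ball 0 1)))
    (hM : ∀ z ∈ ball 0 1, |f z| ≤ M) :
    Tendsto (fun ε : ℝ => ε ^ (-s) * ∫ z in ball 0 1, f z * fracGreen n s (e + ε • ω) z)
      (nhdsWithin 0 (Ioi 0))
      (nhds (∫ z in ball 0 1,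
        f z * ((-2 * ⟪e, ω⟫) ^ s * (1 - ‖z‖ ^ 2) ^ s / (s * ‖z - e‖ ^ n)))) := by
  have hray := tendsto_add_smul_nhdsWithin_ball he hω
  have hscale := (tendsto_neg_two_mul_inner_sub e ω).rpow_const (p := s) (Or.inr hs.le)
  have hlim := hscale.mul ((tendsto_rpow_neg_mul_integral_fracGreen hs he hf hM).comp hray)
  rw [← MeasureTheory.integral_const_mul] at hlim
  simp_rw [mul_left_comm _ (f _), ← mul_div_assoc (_ ^ s)] at hlim
  refine hlim.congr' ?_
  filter_upwards [self_mem_nhdsWithin, hray.eventually self_mem_nhdsWithin]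
    with ε (hε : 0 < ε) hball
  have hpos := one_sub_norm_sq_pos hball
  rw [one_sub_norm_add_smul_sq he, mul_pos_iff_of_pos_left hε] at hpos
  rw [Function.comp_apply, one_sub_norm_add_smul_sq he, Real.mul_rpow hε.le hpos.le, mul_assoc,
    mul_left_comm, ← mul_assoc (_ ^ s), ← Real.rpow_add hpos, add_neg_cancel, Real.rpow_zero,
    one_mul]

/-- Boundary asymptotics of the fractional Green function: for `f ∈ C^α(ℝ^n)` vanishing
outside `B₁`, `lim_{ε→0⁺} ε^{-s} ∫_{B₁} f(z) G(e+εω,z) dz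
= ∫_{B₁} f(z) (-2 e·ω)^s (1-|z|²)^s / (s |z-e|^n) dz`. -/
theorem green_function_boundary_asymptotics
    (n : ℕ) (hn : 1 ≤ n) (s : ℝ) (hs : s ∈ Set.Ioo (0 : ℝ) 1)
    (α : ℝ) (hα : α ∈ Set.Ioo (0 : ℝ) 1)
    (e ω : EuclideanSpace ℝ (Fin n)) (he : ‖e‖ = 1) (hω : ‖ω‖ = 1)
    (εo : ℝ) (hεo : 0 < εo)
    (hin : ∀ ε ∈ Set.Ioc (0 : ℝ) εo,
      e + ε • ω ∈ Metric.ball (0 : EuclideanSpace ℝ (Fin n)) 1)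
    (f : EuclideanSpace ℝ (Fin n) → ℝ)
    (hfH : ∃ C : ℝ, ∀ x y : EuclideanSpace ℝ (Fin n), |f x - f y| ≤ C * ‖x - y‖ ^ α)
    (hfb : ∃ M : ℝ, ∀ x : EuclideanSpace ℝ (Fin n), |f x| ≤ M)
    (hf0 : ∀ x ∉ Metric.ball (0 : EuclideanSpace ℝ (Fin n)) 1, f x = 0) :
    Tendsto (fun ε : ℝ =>
        ε ^ (-s) * ∫ z in Metric.ball (0 : EuclideanSpace ℝ (Fin n)) 1,
          f z * fracGreen n s (e + ε • ω) z)
      (nhdsWithin 0 (Set.Ioi 0))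
      (nhds (∫ z in Metric.ball (0 : EuclideanSpace ℝ (Fin n)) 1,
          f z * ((-2 * ⟪e, ω⟫) ^ s * (1 - ‖z‖ ^ 2) ^ s / (s * ‖z - e‖ ^ n)))) := by
  obtain ⟨⟨C, hC⟩, M, hM⟩ := hfH, hfb
  have hfc : Continuous f := continuous_of_dist_le_mul_rpow hα.1 fun x y => by
    simpa [dist_eq_norm] using hC x y
  exact green_function_boundary_asymptotics_general hs.1 he
    (inner_neg_of_norm_add_smul_lt he hεo (mem_ball_zero_iff.1 (hin εo ⟨hεo, le_rfl⟩)))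
    hfc.aestronglyMeasurable fun z _ => hM z
end
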